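/- arXiv:1005.4043 — 2 statements merged into one kernel-verified Lean document; each statement's English description precedes it below -/
import Mathlib

section
/- For every n ≥ 0 the following sequence is exact: 0 → Ĥ^n_e → H^n_m → H^{n+1}_m → Ĥ^{n+1}_f → 0, where: the first map sends the class (modulo Ĥ^n_f) of a D-cocycle φ + η (φ ∈ C^n_1, η ∈ C^n_m) to the class of τ(φ) in H^n_m (this assignment is well defined); the second map is induced by λ^{(1)} + ρ^{(1)} on cocycles (which is well defined on cohomology); and the third map is the natural surjection of H^{n+1}_m onto Ĥ^{n+1}_f. Consequently dim_ℂ Ĥ^{n+1}_f = dim_ℂ Ĥ^n_e + (r+s−2)(r+s−1)^n. -/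
open Finsupp Submodule LinearMap

set_option maxSynthPendingDepth 2

namespace NilpotentCohomology

/-- The big space of cochains of all degrees: formal ℂ-linear combinations of
basis symbols `φ^I_x` indexed by a multi-index `I : List (Fin m)` and an output
index `x : Fin m`. -/
abbrev Cochain (m : ℕ) : Type := (List (Fin m) × Fin m) →₀ ℂ

/-- Parity of an index: `0` if the index is among the first `r` (even) ones, `1` otherwise. -/
def par (r : ℕ) {m : ℕ} (i : Fin m) : ℕ := if (i : ℕ) < r then 0 else 1

/-- Parity of a multi-index: the sum of the parities of its entries. -/
def lpar (r : ℕ) {m : ℕ} (I : List (Fin m)) : ℕ := (I.map (par r)).sum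

/-- Parity of a basis cochain `φ^I_x`: `|I| + |x|`. -/
def ppar (r : ℕ) {m : ℕ} (p : List (Fin m) × Fin m) : ℕ := lpar r p.1 + par r p.2

/-- `(I, J, k)`: the multi-index `I` with its `k`-th entry (0-indexed) replaced by the string `J`. -/
def insertAt {m : ℕ} (I J : List (Fin m)) (k : ℕ) : List (Fin m) :=
  I.take k ++ J ++ I.drop (k + 1)

/-- The insertion product of two basis cochains `φ^I_x ∘ φ^J_y`. -/
noncomputable def basisComp (r : ℕ) {m : ℕ} (p q : List (Fin m) × Fin m) : Cochain m :=
  ∑ k : Fin p.1.length,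
    if p.1.get k = q.2 then
      ((-1 : ℂ) ^ (lpar r (p.1.take ((k : ℕ) + 1)) * ppar r q)) •
        Finsupp.single (insertAt p.1 q.1 (k : ℕ), p.2) (1 : ℂ)
    else 0

/-- The insertion product, extended bilinearly. -/
noncomputable def comp (r : ℕ) {m : ℕ} :
    Cochain m →ₗ[ℂ] Cochain m →ₗ[ℂ] Cochain m :=
  Finsupp.lsum ℂ fun p => LinearMap.toSpanSingleton ℂ _
    (Finsupp.lsum ℂ fun q => LinearMap.toSpanSingleton ℂ (Cochain m) (basisComp r p q))

/-- The bracket `[φ, ψ] = φ∘ψ − (−1)^{|φ||ψ|} ψ∘φ` of two parity-homogeneous cochains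
of parities `pf` and `pg`. -/
noncomputable def bracket (r : ℕ) {m : ℕ} (pf pg : ℕ) (f g : Cochain m) : Cochain m :=
  comp r f g - ((-1 : ℂ) ^ (pf * pg)) • comp r g f

/-- The quadratic cochain `φ^{(a,a)}_b`. -/
noncomputable def dd {m : ℕ} (a b : Fin m) : Cochain m :=
  Finsupp.single ([a, a], b) (1 : ℂ)

/-- The linear map multiplying each basis cochain by `(−1)^{its parity}`. -/
noncomputable def twist (r : ℕ) {m : ℕ} : Cochain m →ₗ[ℂ] Cochain m :=
  Finsupp.lsum ℂ fun p => LinearMap.toSpanSingleton ℂ (Cochain m)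
    (((-1 : ℂ) ^ (ppar r p)) • Finsupp.single p (1 : ℂ))

/-- The coboundary operator `D(φ) = [d, φ] = d∘φ − (−1)^{|d||φ|} φ∘d` for the odd
codifferential `d = φ^{(a,a)}_b`, extended linearly from parity-homogeneous `φ`. -/
noncomputable def Dop (r : ℕ) {m : ℕ} (a b : Fin m) : Cochain m →ₗ[ℂ] Cochain m :=
  comp r (dd a b) - ((comp r).flip (dd a b)) ∘ₗ twist r

/-- `C^n`: the span of the basis cochains `φ^I_x` with `I` of length `n`. -/
noncomputable def Cn (m n : ℕ) : Submodule ℂ (Cochain m) :=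
  Submodule.span ℂ
    {f | ∃ I : List (Fin m), I.length = n ∧ ∃ x : Fin m, f = Finsupp.single (I, x) 1}

/-- `C^n_x`: the span of the basis cochains `φ^I_x` with `I` of length `n` and output `x`. -/
noncomputable def Cnx (m : ℕ) (n : ℕ) (x : Fin m) : Submodule ℂ (Cochain m) :=
  Submodule.span ℂ
    {f | ∃ I : List (Fin m), I.length = n ∧ f = Finsupp.single (I, x) 1}

/-- The projection onto the cochains with output index `x`. -/
noncomputable def projOut {m : ℕ} (x : Fin m) : Cochain m →ₗ[ℂ] Cochain m :=
  Finsupp.lsum ℂ fun p => LinearMap.toSpanSingleton ℂ (Cochain m)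
    (if p.2 = x then Finsupp.single p (1 : ℂ) else 0)

/-- `λ^J (φ^I_x) = φ^{JI}_x`, extended linearly. -/
noncomputable def lam {m : ℕ} (J : List (Fin m)) : Cochain m →ₗ[ℂ] Cochain m :=
  Finsupp.lsum ℂ fun p => LinearMap.toSpanSingleton ℂ (Cochain m)
    (Finsupp.single (J ++ p.1, p.2) (1 : ℂ))

/-- `ρ^J (φ^I_x) = (−1)^{|I||J|} φ^{IJ}_x`, extended linearly. -/
noncomputable def rho (r : ℕ) {m : ℕ} (J : List (Fin m)) : Cochain m →ₗ[ℂ] Cochain m :=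
  Finsupp.lsum ℂ fun p => LinearMap.toSpanSingleton ℂ (Cochain m)
    (((-1 : ℂ) ^ (lpar r p.1 * lpar r J)) • Finsupp.single (p.1 ++ J, p.2) (1 : ℂ))

/-- `θ = λ^{(a,b)} − λ^{(b,a)}`. -/
noncomputable def theta {m : ℕ} (a b : Fin m) : Cochain m →ₗ[ℂ] Cochain m :=
  lam [a, b] - lam [b, a]

/-- `τ`: swaps the outputs `a` and `b` of basis cochains (identity on other outputs). -/
noncomputable def tau {m : ℕ} (a b : Fin m) : Cochain m →ₗ[ℂ] Cochain m :=
  Finsupp.lsum ℂ fun p => LinearMap.toSpanSingleton ℂ (Cochain m)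
    (Finsupp.single (p.1, if p.2 = a then b else if p.2 = b then a else p.2) (1 : ℂ))

/-! ### Full cohomology -/

/-- Cocycles of degree `n` of the full complex. -/
noncomputable def Zfull (r : ℕ) {m : ℕ} (a b : Fin m) (n : ℕ) : Submodule ℂ (Cochain m) :=
  Cn m n ⊓ LinearMap.ker (Dop r a b)

/-- Coboundaries of degree `n` of the full complex (`C^{-1} = 0`). -/
noncomputable def Bfull (r : ℕ) {m : ℕ} (a b : Fin m) : ℕ → Submodule ℂ (Cochain m)
  | 0 => ⊥
  | n + 1 => Submodule.map (Dop r a b) (Cn m n)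

/-- The full cohomology `H^n = Z^n / B^n`. -/
noncomputable abbrev Hfull (r : ℕ) {m : ℕ} (a b : Fin m) (n : ℕ) : Type :=
  Zfull r a b n ⧸ (Bfull r a b n).comap (Zfull r a b n).subtype

/-! ### The restricted complexes -/

/-- The restricted differential `D_x`: the `e₁`-output component of `D` when `x = a`,
and `D` itself (which preserves output `x`) otherwise. -/
noncomputable def Dx (r : ℕ) {m : ℕ} (a b x : Fin m) : Cochain m →ₗ[ℂ] Cochain m :=
  if x = a then projOut a ∘ₗ Dop r a b else Dop r a b

/-- Cocycles of the restricted complex `(C^•_x, D_x)`. -/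
noncomputable def Zx (r : ℕ) {m : ℕ} (a b x : Fin m) (n : ℕ) : Submodule ℂ (Cochain m) :=
  Cnx m n x ⊓ LinearMap.ker (Dx r a b x)

/-- Coboundaries of the restricted complex `(C^•_x, D_x)` (`C^{-1}_x = 0`). -/
noncomputable def Bx (r : ℕ) {m : ℕ} (a b x : Fin m) : ℕ → Submodule ℂ (Cochain m)
  | 0 => ⊥
  | n + 1 => Submodule.map (Dx r a b x) (Cnx m n x)

/-- Cohomology `H^n_x` of the restricted complex `(C^•_x, D_x)`. -/
noncomputable abbrev Hx (r : ℕ) {m : ℕ} (a b x : Fin m) (n : ℕ) : Type :=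
  Zx r a b x n ⧸ (Bx r a b x n).comap (Zx r a b x n).subtype

/-! ### The subcomplex `C^•_a ⊕ C^•_b` and the `b`-output complex -/

/-- `C^n_a ⊕ C^n_b` (internal direct sum). -/
noncomputable def Cpair (m : ℕ) (a b : Fin m) (n : ℕ) : Submodule ℂ (Cochain m) :=
  Cnx m n a ⊔ Cnx m n b

noncomputable def Zpair (r : ℕ) {m : ℕ} (a b : Fin m) (n : ℕ) : Submodule ℂ (Cochain m) :=
  Cpair m a b n ⊓ LinearMap.ker (Dop r a b)

noncomputable def Bpair (r : ℕ) {m : ℕ} (a b : Fin m) : ℕ → Submodule ℂ (Cochain m)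
  | 0 => ⊥
  | n + 1 => Submodule.map (Dop r a b) (Cpair m a b n)

/-- `H^n`: the cohomology of the subcomplex `(C^•_a ⊕ C^•_b, D)`. -/
noncomputable abbrev Hpair (r : ℕ) {m : ℕ} (a b : Fin m) (n : ℕ) : Type :=
  Zpair r a b n ⧸ (Bpair r a b n).comap (Zpair r a b n).subtype

/-- Cocycles of `(C^•_b, D_b)`, where `D_b` is the restriction of `D`. -/
noncomputable def Zm (r : ℕ) {m : ℕ} (a b : Fin m) (n : ℕ) : Submodule ℂ (Cochain m) :=
  Cnx m n b ⊓ LinearMap.ker (Dop r a b)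

noncomputable def Bm (r : ℕ) {m : ℕ} (a b : Fin m) : ℕ → Submodule ℂ (Cochain m)
  | 0 => ⊥
  | n + 1 => Submodule.map (Dop r a b) (Cnx m n b)

/-- `H^n_b`: the cohomology of `(C^•_b, D_b)`. -/
noncomputable abbrev Hm (r : ℕ) {m : ℕ} (a b : Fin m) (n : ℕ) : Type :=
  Zm r a b n ⧸ (Bm r a b n).comap (Zm r a b n).subtype

lemma Zm_le_Zpair (r : ℕ) {m : ℕ} (a b : Fin m) (n : ℕ) :
    Zm r a b n ≤ Zpair r a b n :=
  inf_le_inf le_sup_right le_rfl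

lemma Bm_le_Bpair (r : ℕ) {m : ℕ} (a b : Fin m) : ∀ n : ℕ, Bm r a b n ≤ Bpair r a b n
  | 0 => bot_le
  | _ + 1 => Submodule.map_mono le_sup_right

/-- The natural map `H^n_b → H^n` induced by the inclusion of cocycles. -/
noncomputable def iotaHm (r : ℕ) {m : ℕ} (a b : Fin m) (n : ℕ) :
    Hm r a b n →ₗ[ℂ] Hpair r a b n :=
  Submodule.mapQ _ _ (Submodule.inclusion (Zm_le_Zpair r a b n))
    (fun z hz => Bm_le_Bpair r a b n hz)

/-- `Ĥ^n_f`: the image of `H^n_b` in `H^n`. -/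
noncomputable def Hfhat (r : ℕ) {m : ℕ} (a b : Fin m) (n : ℕ) : Submodule ℂ (Hpair r a b n) :=
  LinearMap.range (iotaHm r a b n)

/-- `Ĥ^n_e = H^n / Ĥ^n_f`. -/
noncomputable abbrev Hehat (r : ℕ) {m : ℕ} (a b : Fin m) (n : ℕ) : Type :=
  Hpair r a b n ⧸ Hfhat r a b n

/-! ### The spaces `Ĉ^n_x` of nontrivial cocycles -/

/-- The recursively defined subspaces `Ĉ^n_x` of nontrivial cocycles. -/
noncomputable def Chat (r : ℕ) {m : ℕ} (a b x : Fin m) : ℕ → Submodule ℂ (Cochain m)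
  | 0 => Submodule.span ℂ {Finsupp.single (([] : List (Fin m)), x) 1}
  | 1 => Submodule.span ℂ
      ({Finsupp.single ([a], x) 1} ∪
        ⋃ c ∈ {c : Fin m | c ≠ a ∧ c ≠ b}, lam [c] '' (Chat r a b x 0 : Set (Cochain m)))
  | n + 2 => Submodule.span ℂ
      ((⋃ c ∈ {c : Fin m | c ≠ a ∧ c ≠ b},
          lam [c] '' (Chat r a b x (n + 1) : Set (Cochain m))) ∪
        (theta a b '' (Chat r a b x n : Set (Cochain m))) ∪
        ⋃ c ∈ {c : Fin m | c ≠ a ∧ c ≠ b},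
          (lam [a] + rho r [a]) '' (lam [c] '' (Chat r a b x n : Set (Cochain m))))

/-!
Let `P = substD` be the half of `D` given by insertions of `d`, and `L = λ^{(a)} + ρ^{(a)}`. On a
cochain `τ(u) + η` with `u`, `η` in `C_b`, one has `D(τ(u) + η) = -τ(P u) + (L u + P η)`, so
`C_a ⊕ C_b` is the mapping cone of the chain map `L` on `(C_b, P)`, and the sequence is cut out of
its long exact sequence, in which `L` is the connecting map.

For the dimensions, a cochain is split by its first letter. With `X_n` the space of `u` such that
`φ^a ⊗ u` is a coboundary, `dim Z^{n+1} = (m - 1) dim Z^n + dim X_n` and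
`dim B^{n+1} = (m - 1) dim B^n + dim X_n`: the unknown `dim X_n` cancels, whence
`dim H^n_b = (m - 1)^n`.
-/

section Operators

variable {m : ℕ}

/-- The basis cochain `φ^I_x`. -/
noncomputable def phi (I : List (Fin m)) (x : Fin m) : Cochain m := single (I, x) 1

/-- The half `φ ↦ −(−1)^|φ| φ ∘ d` of `D` for `d = φ^{(a,a)}_b`: up to signs, the derivation of the
tensor algebra that substitutes `(a,a)` for each occurrence of `b` in a multi-index. -/
noncomputable def substD (r : ℕ) (a b : Fin m) : Cochain m →ₗ[ℂ] Cochain m :=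
  -((comp r).flip (dd a b) ∘ₗ twist r)

/-- `λ^{(a)} + ρ^{(a)}`. -/
noncomputable def lamAddRho (r : ℕ) (a : Fin m) : Cochain m →ₗ[ℂ] Cochain m := lam [a] + rho r [a]

/-- The map `φ^I_x ↦ φ^I_y` that kills the basis cochains with an output other than `x`. For
`(x, y) = (a, b)` it is `φ + η ↦ τ(φ)` on `C_a ⊕ C_b`; `(x, y) = (b, a)` gives a section of it. -/
noncomputable def moveOut (x y : Fin m) : Cochain m →ₗ[ℂ] Cochain m := tau x y ∘ₗ projOut x

section Basis

variable {M : Type*} [AddCommMonoid M] [Module ℂ M] {f g : Cochain m →ₗ[ℂ] M}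

lemma hom_ext_phi (h : ∀ I x, f (phi I x) = g (phi I x)) : f = g :=
  Finsupp.lhom_ext' fun ⟨I, x⟩ => LinearMap.ext_ring (h I x)

lemma phi_cons (i : Fin m) (I : List (Fin m)) (x : Fin m) : phi (i :: I) x = lam [i] (phi I x) := by
  simp [lam, phi]

lemma hom_ext_lam (nil : ∀ x, f (phi [] x) = g (phi [] x))
    (cons : ∀ i u, f u = g u → f (lam [i] u) = g (lam [i] u)) : f = g := by
  refine hom_ext_phi fun I x => ?_
  induction I with
  | nil => exact nil x
  | cons i I ih => rw [phi_cons]; exact cons i _ ih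

end Basis

@[simp]
lemma lam_phi (J I : List (Fin m)) (x : Fin m) : lam J (phi I x) = phi (J ++ I) x := by
  simp [lam, phi]

@[simp]
lemma rho_phi (r : ℕ) (J I : List (Fin m)) (x : Fin m) :
    rho r J (phi I x) = (-1 : ℂ) ^ (lpar r I * lpar r J) • phi (I ++ J) x := by
  simp [rho, phi]

@[simp]
lemma twist_phi (r : ℕ) (I : List (Fin m)) (x : Fin m) :
    twist r (phi I x) = (-1 : ℂ) ^ (lpar r I + par r x) • phi I x := by
  simp [twist, phi, ppar]

@[simp]
lemma moveOut_phi (y z : Fin m) (I : List (Fin m)) (x : Fin m) :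
    moveOut y z (phi I x) = if x = y then phi I z else 0 := by
  by_cases h : x = y <;> simp [moveOut, tau, projOut, phi, h]

lemma comp_phi (r : ℕ) (I J : List (Fin m)) (x y : Fin m) :
    comp r (phi I x) (phi J y) = basisComp r (I, x) (J, y) := by
  simp [comp, phi]

@[simp]
lemma lpar_nil (r : ℕ) : lpar r ([] : List (Fin m)) = 0 := rfl

@[simp]
lemma lpar_cons (r : ℕ) (i : Fin m) (I : List (Fin m)) :
    lpar r (i :: I) = par r i + lpar r I := by
  simp [lpar]

@[simp]
lemma lpar_append (r : ℕ) (I J : List (Fin m)) : lpar r (I ++ J) = lpar r I + lpar r J := by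
  simp [lpar]

lemma twist_lam (r : ℕ) (i : Fin m) (u : Cochain m) :
    twist r (lam [i] u) = (-1 : ℂ) ^ par r i • lam [i] (twist r u) :=
  LinearMap.congr_fun (f := twist r ∘ₗ lam [i]) (g := (-1 : ℂ) ^ par r i • lam [i] ∘ₗ twist r)
    (hom_ext_phi fun I x => by simp [pow_add, smul_smul, mul_assoc]) u

@[simp]
lemma twist_twist (r : ℕ) (u : Cochain m) : twist r (twist r u) = u :=
  LinearMap.congr_fun (f := twist r ∘ₗ twist r) (g := LinearMap.id)
    (hom_ext_phi fun I x => by simp [smul_smul, ← mul_pow]) u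

lemma twist_lam_lam (r : ℕ) (i : Fin m) (u : Cochain m) :
    twist r (lam [i] (lam [i] u)) = lam [i] (lam [i] (twist r u)) := by
  simp [twist_lam, smul_smul, ← mul_pow]

lemma rho_lam (r : ℕ) {a : Fin m} (ha : par r a = 0) (J : List (Fin m)) (u : Cochain m) :
    rho r [a] (lam J u) = lam J (rho r [a] u) :=
  LinearMap.congr_fun (f := rho r [a] ∘ₗ lam J) (g := lam J ∘ₗ rho r [a])
    (hom_ext_phi fun I x => by simp [ha]) u

lemma rho_twist (r : ℕ) {a : Fin m} (ha : par r a = 0) (u : Cochain m) :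
    rho r [a] (twist r u) = twist r (rho r [a] u) :=
  LinearMap.congr_fun (f := rho r [a] ∘ₗ twist r) (g := twist r ∘ₗ rho r [a])
    (hom_ext_phi fun I x => by simp [ha]) u

lemma moveOut_lam (x y : Fin m) (J : List (Fin m)) (u : Cochain m) :
    moveOut x y (lam J u) = lam J (moveOut x y u) :=
  LinearMap.congr_fun (f := moveOut x y ∘ₗ lam J) (g := lam J ∘ₗ moveOut x y)
    (hom_ext_phi fun I z => by by_cases h : z = x <;> simp [h]) u

lemma neg_one_pow_par {r : ℕ} {x y : Fin m} (hxy : par r x ≠ par r y) :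
    (-1 : ℂ) ^ par r x = -(-1) ^ par r y := by
  unfold par at *
  split_ifs at * <;> simp_all

lemma moveOut_twist {r : ℕ} {x y : Fin m} (hxy : par r x ≠ par r y) (u : Cochain m) :
    moveOut x y (twist r u) = -twist r (moveOut x y u) :=
  LinearMap.congr_fun (f := moveOut x y ∘ₗ twist r) (g := -(twist r ∘ₗ moveOut x y))
    (hom_ext_phi fun I z => by
      by_cases h : z = x <;> simp [h, pow_add, neg_one_pow_par hxy]) u

lemma basisComp_dd_cons {r : ℕ} (a : Fin m) {b : Fin m} (hb : par r b = 1)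
    (i : Fin m) (I : List (Fin m)) (x : Fin m) :
    basisComp r (i :: I, x) ([a, a], b) =
      (-1 : ℂ) ^ par r i • lam [i] (basisComp r (I, x) ([a, a], b)) -
        if i = b then lam [a] (lam [a] (phi I x)) else 0 := by
  have odd_d (k : ℕ) : (-1 : ℂ) ^ (k * ppar r ([a, a], b)) = (-1) ^ k := by
    simp only [ppar, lpar_cons, lpar_nil, hb]
    rw [show k * (par r a + (par r a + 0) + 1) = k + 2 * (k * par r a) by ring, pow_add, pow_mul]
    simp
  simp only [basisComp, odd_d]
  refine (Fin.sum_univ_succ (n := I.length) _).trans ?_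
  rw [sub_eq_neg_add]
  congr 1
  · by_cases h : i = b <;> simp [h, hb, insertAt, phi, lam]
  · rw [map_sum, Finset.smul_sum]
    refine Finset.sum_congr rfl fun k _ => ?_
    by_cases h : I[(k : ℕ)] = b <;> simp [h, insertAt, pow_add, lam]

lemma substD_phi (r : ℕ) (a b : Fin m) (I : List (Fin m)) (x : Fin m) :
    substD r a b (phi I x) =
      -((-1 : ℂ) ^ (lpar r I + par r x) • basisComp r (I, x) ([a, a], b)) := by
  rw [substD, LinearMap.neg_apply, LinearMap.comp_apply, twist_phi, map_smul, LinearMap.flip_apply,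
    show dd a b = phi [a, a] b from rfl, comp_phi]

@[simp]
lemma substD_phi_nil (r : ℕ) (a b x : Fin m) : substD r a b (phi [] x) = 0 := by
  simp [substD_phi, basisComp]

lemma substD_lam_self {r : ℕ} (a : Fin m) {b : Fin m} (hb : par r b = 1) (u : Cochain m) :
    substD r a b (lam [b] u) = lam [b] (substD r a b u) - lam [a] (lam [a] (twist r u)) := by
  refine LinearMap.congr_fun (f := substD r a b ∘ₗ lam [b])
    (g := lam [b] ∘ₗ substD r a b - lam [a] ∘ₗ lam [a] ∘ₗ twist r) (hom_ext_phi fun I x => ?_) u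
  simp only [LinearMap.comp_apply, LinearMap.sub_apply, ← phi_cons, substD_phi,
    basisComp_dd_cons a hb, lpar_cons, hb, twist_phi, map_neg, map_smul, if_pos]
  module

lemma substD_lam_of_ne {r : ℕ} (a : Fin m) {b i : Fin m} (hb : par r b = 1) (hi : i ≠ b)
    (u : Cochain m) : substD r a b (lam [i] u) = lam [i] (substD r a b u) := by
  refine LinearMap.congr_fun (f := substD r a b ∘ₗ lam [i]) (g := lam [i] ∘ₗ substD r a b)
    (hom_ext_phi fun I x => ?_) u
  simp only [LinearMap.comp_apply, ← phi_cons, substD_phi, basisComp_dd_cons a hb, lpar_cons,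
    map_neg, map_smul, if_neg hi, sub_zero, smul_smul]
  congr 2
  rw [← pow_add, show par r i + lpar r I + par r x + par r i =
    lpar r I + par r x + 2 * par r i by ring, pow_add, pow_mul]
  simp

section Differential

variable {r : ℕ} {a b : Fin m}

lemma twist_substD (hb : par r b = 1) (u : Cochain m) :
    twist r (substD r a b u) = -substD r a b (twist r u) := by
  refine LinearMap.congr_fun (f := twist r ∘ₗ substD r a b) (g := -(substD r a b ∘ₗ twist r))
    (hom_ext_lam (fun x => by simp) fun i u ih => ?_) u
  simp only [LinearMap.comp_apply, LinearMap.neg_apply] at ih ⊢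
  rcases eq_or_ne i b with rfl | hi
  · rw [twist_lam, map_smul, substD_lam_self a hb, substD_lam_self a hb, map_sub, twist_lam, ih,
      twist_lam_lam, hb, map_neg]
    module
  · rw [twist_lam, map_smul, substD_lam_of_ne a hb hi, substD_lam_of_ne a hb hi, twist_lam, ih,
      map_neg, smul_neg]

lemma substD_substD (hab : a ≠ b) (hb : par r b = 1) (u : Cochain m) :
    substD r a b (substD r a b u) = 0 := by
  refine LinearMap.congr_fun (f := substD r a b ∘ₗ substD r a b) (g := 0)
    (hom_ext_lam (fun x => by simp) fun i u ih => ?_) u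
  simp only [LinearMap.comp_apply, LinearMap.zero_apply] at ih ⊢
  rcases eq_or_ne i b with rfl | hi
  · rw [substD_lam_self a hb, map_sub, substD_lam_self a hb, ih, substD_lam_of_ne a hb hab,
      substD_lam_of_ne a hb hab, twist_substD hb]
    simp
  · rw [substD_lam_of_ne a hb hi, substD_lam_of_ne a hb hi, ih, map_zero]

lemma substD_rho (ha : par r a = 0) (hb : par r b = 1) (u : Cochain m) :
    substD r a b (rho r [a] u) = rho r [a] (substD r a b u) := by
  have hab : a ≠ b := by rintro rfl; omega
  refine LinearMap.congr_fun (f := substD r a b ∘ₗ rho r [a]) (g := rho r [a] ∘ₗ substD r a b)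
    (hom_ext_lam (fun x => ?_) fun i u ih => ?_) u
  · simpa using substD_lam_of_ne a hb hab (phi [] x)
  · simp only [LinearMap.comp_apply] at ih ⊢
    rw [rho_lam r ha]
    rcases eq_or_ne i b with rfl | hi
    · rw [substD_lam_self a hb, substD_lam_self a hb, map_sub, rho_lam r ha, rho_lam r ha,
        rho_lam r ha, rho_twist r ha, ih]
    · rw [substD_lam_of_ne a hb hi, substD_lam_of_ne a hb hi, rho_lam r ha, ih]

lemma substD_lamAddRho (ha : par r a = 0) (hb : par r b = 1) (u : Cochain m) :
    substD r a b (lamAddRho r a u) = lamAddRho r a (substD r a b u) := by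
  have hab : a ≠ b := by rintro rfl; omega
  simp [lamAddRho, substD_rho ha hb, substD_lam_of_ne a hb hab]

lemma moveOut_substD (hb : par r b = 1) {x y : Fin m} (hxy : par r x ≠ par r y) (u : Cochain m) :
    moveOut x y (substD r a b u) = -substD r a b (moveOut x y u) := by
  refine LinearMap.congr_fun (f := moveOut x y ∘ₗ substD r a b)
    (g := -(substD r a b ∘ₗ moveOut x y)) (hom_ext_lam (fun z => ?_) fun i u ih => ?_) u
  · by_cases h : z = x <;> simp [h]
  · simp only [LinearMap.comp_apply, LinearMap.neg_apply] at ih ⊢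
    rcases eq_or_ne i b with rfl | hi
    · rw [moveOut_lam, substD_lam_self a hb, substD_lam_self a hb, map_sub, moveOut_lam,
        moveOut_lam, moveOut_lam, moveOut_twist hxy, ih]
      simp only [map_neg]
      abel
    · rw [moveOut_lam, substD_lam_of_ne a hb hi, substD_lam_of_ne a hb hi, moveOut_lam, ih, map_neg]

end Differential

lemma basisComp_dd_left (r : ℕ) (a b : Fin m) (I : List (Fin m)) (x : Fin m) :
    basisComp r ([a, a], b) (I, x) =
      if a = x then (-1 : ℂ) ^ (par r a * (lpar r I + par r x)) • phi (I ++ [a]) b +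
        (-1 : ℂ) ^ ((par r a + par r a) * (lpar r I + par r x)) • phi (a :: I) b
      else 0 := by
  refine (Fin.sum_univ_two (M := Cochain m) _).trans ?_
  by_cases h : a = x <;> simp [h, insertAt, ppar, phi]

lemma comp_dd (r : ℕ) (a b : Fin m) (u : Cochain m) :
    comp r (dd a b) u =
      lam [a] (moveOut a b u) + (-1 : ℂ) ^ par r a • rho r [a] (moveOut a b u) := by
  refine LinearMap.congr_fun (f := comp r (dd a b)) (g := lam [a] ∘ₗ moveOut a b +
    (-1 : ℂ) ^ par r a • rho r [a] ∘ₗ moveOut a b) (hom_ext_phi fun I x => ?_) u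
  rw [show dd a b = phi [a, a] b from rfl, comp_phi, basisComp_dd_left]
  rcases eq_or_ne a x with rfl | h
  · have sign_last : (-1 : ℂ) ^ (par r a * (lpar r I + par r a)) =
        (-1) ^ par r a * (-1) ^ (lpar r I * par r a) := by
      unfold par
      split_ifs <;> simp [pow_succ']
    have sign_first : (-1 : ℂ) ^ ((par r a + par r a) * (lpar r I + par r a)) = 1 := by
      rw [← two_mul, mul_assoc, pow_mul]
      simp
    rw [if_pos rfl, sign_last, sign_first]
    simp [smul_smul, add_comm]
  · simp [h, h.symm]

lemma Dop_eq_substD_add (r : ℕ) (a b : Fin m) (u : Cochain m) :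
    Dop r a b u = substD r a b u + comp r (dd a b) u := by
  simp only [Dop, substD, LinearMap.sub_apply, LinearMap.neg_apply]
  abel

lemma Dop_eq {r : ℕ} {a : Fin m} (ha : par r a = 0) (b : Fin m) (u : Cochain m) :
    Dop r a b u = substD r a b u + lamAddRho r a (moveOut a b u) := by
  simp [Dop_eq_substD_add, comp_dd, ha, lamAddRho]

end Operators

section RankNullity

variable {K V₁ V₂ V₃ V₄ : Type*} [DivisionRing K] [AddCommGroup V₁] [Module K V₁]
  [AddCommGroup V₂] [Module K V₂] [AddCommGroup V₃] [Module K V₃] [AddCommGroup V₄] [Module K V₄]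

lemma finrank_map_add_finrank_inf_ker (U : Submodule K V₁) [FiniteDimensional K U]
    (f : V₁ →ₗ[K] V₂) :
    Module.finrank K (U.map f) + Module.finrank K (U ⊓ ker f : Submodule K V₁) =
      Module.finrank K U := by
  rw [← Submodule.map_comap_subtype, Submodule.finrank_map_subtype_eq, ← LinearMap.ker_domRestrict,
    ← LinearMap.range_domRestrict, LinearMap.finrank_range_add_finrank_ker]

lemma finrank_add_finrank_of_exact [FiniteDimensional K V₂] [FiniteDimensional K V₃]
    {f : V₁ →ₗ[K] V₂} {g : V₂ →ₗ[K] V₃} {h : V₃ →ₗ[K] V₄} (hf : Function.Injective f)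
    (hfg : range f = ker g) (hgh : range g = ker h) (hh : Function.Surjective h) :
    Module.finrank K V₄ + Module.finrank K V₂ = Module.finrank K V₁ + Module.finrank K V₃ := by
  rw [← LinearMap.finrank_range_add_finrank_ker g, ← LinearMap.finrank_range_add_finrank_ker h,
    ← hfg, hgh, LinearMap.finrank_range_of_inj hf, LinearMap.range_eq_top.2 hh, finrank_top]
  ring

end RankNullity

section FirstLetter

variable {m n : ℕ}

/-- Extraction of the first letter: `φ^{iI}_x ↦ φ^I_x`, and `φ^J_x ↦ 0` if `J` does not start
with `i`. It is a left inverse of `λ^{(i)}`. -/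
noncomputable def strip (i : Fin m) : Cochain m →ₗ[ℂ] Cochain m :=
  Finsupp.lsum ℂ fun p => LinearMap.toSpanSingleton ℂ (Cochain m)
    (if p.1.head? = some i then phi p.1.tail p.2 else 0)

lemma strip_phi (i : Fin m) (I : List (Fin m)) (x : Fin m) :
    strip i (phi I x) = if I.head? = some i then phi I.tail x else 0 := by
  simp [strip, phi]

lemma strip_lam (i j : Fin m) (u : Cochain m) :
    strip i (lam [j] u) = if j = i then u else 0 := by
  refine LinearMap.congr_fun (f := strip i ∘ₗ lam [j]) (g := if j = i then LinearMap.id else 0)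
    (hom_ext_phi fun I x => ?_) u |>.trans ?_
  · by_cases h : j = i <;> simp [strip_phi, h]
  · split_ifs <;> rfl

@[simp]
lemma strip_lam_self (i : Fin m) (u : Cochain m) : strip i (lam [i] u) = u := by
  rw [strip_lam, if_pos rfl]

lemma strip_lam_of_ne {i j : Fin m} (h : j ≠ i) (u : Cochain m) : strip i (lam [j] u) = 0 := by
  rw [strip_lam, if_neg h]

lemma lam_injective (i : Fin m) : Function.Injective (lam [i] : Cochain m →ₗ[ℂ] Cochain m) :=
  Function.LeftInverse.injective (strip_lam_self i)

section Substitution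

variable {r : ℕ} {a b : Fin m}

lemma strip_substD_self (hab : a ≠ b) (hb : par r b = 1) (u : Cochain m) :
    strip a (substD r a b u) = substD r a b (strip a u) - lam [a] (twist r (strip b u)) := by
  refine LinearMap.congr_fun (f := strip a ∘ₗ substD r a b)
    (g := substD r a b ∘ₗ strip a - lam [a] ∘ₗ twist r ∘ₗ strip b)
    (hom_ext_lam (fun x => by simp [strip_phi]) fun i u _ => ?_) u
  simp only [LinearMap.comp_apply, LinearMap.sub_apply]
  rcases eq_or_ne i b with rfl | hib
  · simp [substD_lam_self a hb, strip_lam_of_ne hab.symm]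
  · rcases eq_or_ne i a with rfl | hia
    · simp [substD_lam_of_ne i hb hib, strip_lam_of_ne hib]
    · simp [substD_lam_of_ne a hb hib, strip_lam_of_ne hib, strip_lam_of_ne hia]

lemma strip_substD_of_ne (hb : par r b = 1) {i : Fin m} (hi : i ≠ a) (u : Cochain m) :
    strip i (substD r a b u) = substD r a b (strip i u) := by
  refine LinearMap.congr_fun (f := strip i ∘ₗ substD r a b) (g := substD r a b ∘ₗ strip i)
    (hom_ext_lam (fun x => by simp [strip_phi]) fun j u _ => ?_) u
  simp only [LinearMap.comp_apply]
  rcases eq_or_ne j b with rfl | hjb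
  · rcases eq_or_ne j i with rfl | hji
    · simp [substD_lam_self a hb, strip_lam_of_ne hi.symm]
    · simp [substD_lam_self a hb, strip_lam_of_ne hi.symm, strip_lam_of_ne hji]
  · rcases eq_or_ne j i with rfl | hji
    · simp [substD_lam_of_ne a hb hjb]
    · simp [substD_lam_of_ne a hb hjb, strip_lam_of_ne hji]

lemma strip_substD (hab : a ≠ b) (hb : par r b = 1) {u : Cochain m} (hu : strip b u = 0)
    (i : Fin m) : strip i (substD r a b u) = substD r a b (strip i u) := by
  rcases eq_or_ne i a with rfl | hi
  · rw [strip_substD_self hab hb, hu, map_zero, map_zero, sub_zero]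
  · exact strip_substD_of_ne hb hi u

end Substitution

section Degree

variable {x : Fin m} {u : Cochain m}

lemma phi_mem_Cnx (I : List (Fin m)) (x : Fin m) : phi I x ∈ Cnx m I.length x :=
  subset_span ⟨I, rfl, rfl⟩

lemma map_mem_of_forall_phi {f : Cochain m →ₗ[ℂ] Cochain m} {W : Submodule ℂ (Cochain m)}
    (h : ∀ I : List (Fin m), I.length = n → f (phi I x) ∈ W) (hu : u ∈ Cnx m n x) : f u ∈ W := by
  have le : Cnx m n x ≤ W.comap f := span_le.2 (by rintro _ ⟨I, hI, rfl⟩; exact h I hI)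
  exact le hu

lemma map_eq_of_forall_phi {f g : Cochain m →ₗ[ℂ] Cochain m}
    (h : ∀ I : List (Fin m), I.length = n → f (phi I x) = g (phi I x)) (hu : u ∈ Cnx m n x) :
    f u = g u :=
  LinearMap.eqOn_span (by rintro _ ⟨I, hI, rfl⟩; exact h I hI) hu

lemma lam_mem_Cnx (i : Fin m) (hu : u ∈ Cnx m n x) : lam [i] u ∈ Cnx m (n + 1) x :=
  map_mem_of_forall_phi (by rintro I rfl; rw [lam_phi]; exact phi_mem_Cnx (i :: I) x) hu

lemma twist_mem_Cnx (r : ℕ) (hu : u ∈ Cnx m n x) : twist r u ∈ Cnx m n x :=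
  map_mem_of_forall_phi
    (by rintro I rfl; rw [twist_phi]; exact smul_mem _ _ (phi_mem_Cnx I x)) hu

lemma lamAddRho_mem_Cnx (r : ℕ) (a : Fin m) (hu : u ∈ Cnx m n x) :
    lamAddRho r a u ∈ Cnx m (n + 1) x := by
  refine add_mem (lam_mem_Cnx a hu) (map_mem_of_forall_phi ?_ hu)
  rintro I rfl
  rw [rho_phi]
  exact smul_mem _ _ (by simpa using phi_mem_Cnx (I ++ [a]) x)

lemma moveOut_mem_Cnx (y : Fin m) (hu : u ∈ Cnx m n x) : moveOut x y u ∈ Cnx m n y :=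
  map_mem_of_forall_phi (by rintro I rfl; rw [moveOut_phi, if_pos rfl]; exact phi_mem_Cnx I y) hu

lemma moveOut_moveOut (y : Fin m) (hu : u ∈ Cnx m n x) : moveOut y x (moveOut x y u) = u :=
  map_eq_of_forall_phi (f := moveOut y x ∘ₗ moveOut x y) (g := LinearMap.id) (by simp) hu

lemma moveOut_eq_zero {y : Fin m} (z : Fin m) (hxy : x ≠ y) (hu : u ∈ Cnx m n x) :
    moveOut y z u = 0 :=
  map_eq_of_forall_phi (g := 0) (by simp [hxy]) hu

lemma strip_mem_Cnx (i : Fin m) (hu : u ∈ Cnx m (n + 1) x) : strip i u ∈ Cnx m n x := by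
  refine map_mem_of_forall_phi (fun I hI => ?_) hu
  obtain ⟨j, J, rfl⟩ := List.exists_cons_of_length_eq_add_one hI
  obtain rfl : J.length = n := by simpa using hI
  rw [phi_cons, strip_lam]
  split_ifs
  exacts [phi_mem_Cnx J x, zero_mem _]

lemma sum_lam_strip (hu : u ∈ Cnx m (n + 1) x) : ∑ i, lam [i] (strip i u) = u := by
  have := map_eq_of_forall_phi (f := ∑ i, lam [i] ∘ₗ strip i) (g := LinearMap.id)
    (fun I hI => ?_) hu
  · simpa using this
  · obtain ⟨j, J, rfl⟩ := List.exists_cons_of_length_eq_add_one hI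
    simp only [phi_cons, LinearMap.sum_apply, LinearMap.comp_apply, LinearMap.id_apply]
    exact (Finset.sum_eq_single j (fun i _ hi => by rw [strip_lam_of_ne hi.symm, map_zero])
      (by simp)).trans (by rw [strip_lam_self])

lemma eq_zero_of_strip_eq_zero (hu : u ∈ Cnx m (n + 1) x) (h : ∀ i, strip i u = 0) : u = 0 := by
  rw [← sum_lam_strip hu]
  simp [h]

lemma substD_mem_Cnx {r : ℕ} (a : Fin m) {b : Fin m} (hb : par r b = 1) (hu : u ∈ Cnx m n x) :
    substD r a b u ∈ Cnx m (n + 1) x := by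
  refine map_mem_of_forall_phi ?_ hu
  rintro I rfl
  clear hu
  induction I with
  | nil => simp
  | cons i I ih =>
    rw [phi_cons]
    rcases eq_or_ne i b with rfl | hi
    · rw [substD_lam_self a hb]
      exact sub_mem (lam_mem_Cnx i ih)
        (lam_mem_Cnx a (lam_mem_Cnx a (twist_mem_Cnx r (phi_mem_Cnx I x))))
    · rw [substD_lam_of_ne a hb hi]
      exact lam_mem_Cnx i ih

lemma substD_eq_zero (r : ℕ) (a b : Fin m) (hu : u ∈ Cnx m 0 x) : substD r a b u = 0 :=
  map_eq_of_forall_phi (g := 0) (fun I hI => by simp [List.length_eq_zero_iff.1 hI]) hu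

instance finiteDimensional_Cnx : FiniteDimensional ℂ (Cnx m n x) :=
  FiniteDimensional.span_of_finite ℂ <|
    ((List.finite_length_eq (Fin m) n).image fun I => phi I x).subset <| by
      rintro _ ⟨I, hI, rfl⟩
      exact ⟨I, hI, rfl⟩

lemma finrank_Cnx_zero : Module.finrank ℂ (Cnx m 0 x) = 1 := by
  have : Cnx m 0 x = span ℂ {phi [] x} := by simp [Cnx, phi]
  rw [this, finrank_span_singleton (by simp [phi])]

lemma finrank_eq_sum_of_strip {U : Submodule ℂ (Cochain m)} {W : Fin m → Submodule ℂ (Cochain m)}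
    (hW : ∀ i, W i ≤ Cnx m n x)
    (hU : ∀ u, u ∈ U ↔ u ∈ Cnx m (n + 1) x ∧ ∀ i, strip i u ∈ W i) :
    Module.finrank ℂ U = ∑ i, Module.finrank ℂ (W i) := by
  have (i : Fin m) : FiniteDimensional ℂ (W i) := finiteDimensional_of_le (hW i)
  let stripAll : U →ₗ[ℂ] Π i, W i :=
    LinearMap.pi fun i => (strip i).restrict fun u hu => ((hU u).1 hu).2 i
  have bijective : Function.Bijective stripAll := by
    refine ⟨LinearMap.ker_eq_bot.1 (LinearMap.ker_eq_bot'.2 fun u hu => Subtype.ext ?_),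
      fun w => ⟨⟨∑ i, lam [i] (w i), (hU _).2 ⟨?_, fun i => ?_⟩⟩, ?_⟩⟩
    · exact eq_zero_of_strip_eq_zero ((hU u).1 u.2).1 fun i => congrArg Subtype.val (congrFun hu i)
    · exact sum_mem fun i _ => lam_mem_Cnx i (hW i (w i).2)
    · simp [strip_lam]
    · funext i
      exact Subtype.ext (by simp [stripAll, strip_lam])
  rw [(LinearEquiv.ofBijective stripAll bijective).finrank_eq, Module.finrank_pi_fintype]

end Degree

end FirstLetter

section Dimension

variable {m r : ℕ} {a b : Fin m} {n : ℕ} {x : Fin m} {u : Cochain m}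

lemma projOut_phi (y : Fin m) (I : List (Fin m)) (x : Fin m) :
    projOut y (phi I x) = if x = y then phi I x else 0 := by
  simp [projOut, phi]

lemma projOut_eq_self (hu : u ∈ Cnx m n x) : projOut x u = u :=
  map_eq_of_forall_phi (g := LinearMap.id) (fun I _ => by simp [projOut_phi]) hu

lemma projOut_comp_dd (hab : a ≠ b) (u : Cochain m) : projOut a (comp r (dd a b) u) = 0 := by
  rw [comp_dd]
  refine LinearMap.congr_fun (f := projOut a ∘ₗ (lam [a] ∘ₗ moveOut a b +
    (-1 : ℂ) ^ par r a • rho r [a] ∘ₗ moveOut a b)) (g := 0) (hom_ext_phi fun I x => ?_) u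
  by_cases h : x = a <;> simp [h, projOut_phi, hab.symm]

lemma Dx_eq_substD (hab : a ≠ b) (hb : par r b = 1) (hu : u ∈ Cnx m n x) :
    Dx r a b x u = substD r a b u := by
  rcases eq_or_ne x a with rfl | hx
  · rw [Dx, if_pos rfl, LinearMap.comp_apply, Dop_eq_substD_add, map_add, projOut_comp_dd hab,
      add_zero, projOut_eq_self (substD_mem_Cnx x hb hu)]
  · rw [Dx, if_neg hx, Dop_eq_substD_add, comp_dd, moveOut_eq_zero b hx hu]
    simp

lemma mem_Zx (hab : a ≠ b) (hb : par r b = 1) :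
    u ∈ Zx r a b x n ↔ u ∈ Cnx m n x ∧ substD r a b u = 0 := by
  refine mem_inf.trans (and_congr_right fun hu => ?_)
  rw [LinearMap.mem_ker, Dx_eq_substD hab hb hu]

lemma mem_Bx_succ (hab : a ≠ b) (hb : par r b = 1) :
    u ∈ Bx r a b x (n + 1) ↔ ∃ v ∈ Cnx m n x, substD r a b v = u :=
  mem_map.trans (exists_congr fun _ => and_congr_right fun hv => by rw [Dx_eq_substD hab hb hv])

lemma Bx_le_Zx (hab : a ≠ b) (hb : par r b = 1) : Bx r a b x n ≤ Zx r a b x n := by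
  cases n with
  | zero => exact bot_le
  | succ n =>
    intro u hu
    obtain ⟨v, hv, rfl⟩ := (mem_Bx_succ hab hb).1 hu
    exact (mem_Zx hab hb).2 ⟨substD_mem_Cnx a hb hv, substD_substD hab hb v⟩

lemma Zx_le_Cnx : Zx r a b x n ≤ Cnx m n x := inf_le_left

lemma Bx_le_Cnx (hab : a ≠ b) (hb : par r b = 1) : Bx r a b x n ≤ Cnx m n x :=
  (Bx_le_Zx hab hb).trans Zx_le_Cnx

instance : FiniteDimensional ℂ (Zx r a b x n) := finiteDimensional_of_le Zx_le_Cnx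

/-- The cochains `u` of degree `n` for which `φ^a ⊗ u = λ^{(a)}(u)` is a coboundary. -/
noncomputable def lamExact (r : ℕ) (a b x : Fin m) (n : ℕ) : Submodule ℂ (Cochain m) :=
  (Bx r a b x (n + 1)).comap (lam [a])

lemma mem_lamExact (hab : a ≠ b) (hb : par r b = 1) :
    u ∈ lamExact r a b x n ↔ ∃ v ∈ Cnx m n x, substD r a b v = lam [a] u :=
  mem_Bx_succ hab hb

lemma lamExact_le_Cnx (hab : a ≠ b) (hb : par r b = 1) : lamExact r a b x n ≤ Cnx m n x :=
  fun u hu => by simpa using strip_mem_Cnx a (Bx_le_Cnx hab hb hu)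

lemma twist_mem_lamExact (hab : a ≠ b) (hb : par r b = 1) (hu : u ∈ lamExact r a b x n) :
    twist r u ∈ lamExact r a b x n := by
  obtain ⟨v, hv, hvu⟩ := (mem_lamExact hab hb).1 hu
  refine (mem_lamExact hab hb).2 ⟨-((-1 : ℂ) ^ par r a • twist r v),
    neg_mem (smul_mem _ _ (twist_mem_Cnx r hv)), ?_⟩
  rw [map_neg, map_smul, ← smul_neg, ← twist_substD hb, hvu, twist_lam, smul_smul, ← mul_pow]
  simp

lemma substD_eq_zero_of_mem_lamExact (hab : a ≠ b) (hb : par r b = 1)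
    (hu : u ∈ lamExact r a b x n) : substD r a b u = 0 := by
  obtain ⟨v, -, hvu⟩ := (mem_lamExact hab hb).1 hu
  apply lam_injective a
  rw [← substD_lam_of_ne a hb hab, ← hvu, substD_substD hab hb, map_zero]

lemma map_strip_Zx (hab : a ≠ b) (hb : par r b = 1) :
    (Zx r a b x (n + 1)).map (strip b) = lamExact r a b x n := by
  apply le_antisymm
  · rintro _ ⟨u, hu, rfl⟩
    obtain ⟨u_mem, Du⟩ := (mem_Zx hab hb).1 hu
    have eq : substD r a b (strip a u) = lam [a] (twist r (strip b u)) :=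
      sub_eq_zero.1 (by rw [← strip_substD_self hab hb, Du, map_zero])
    have := twist_mem_lamExact hab hb <|
      (mem_lamExact hab hb).2 ⟨strip a u, strip_mem_Cnx a u_mem, eq⟩
    rwa [twist_twist] at this
  · intro u hu
    obtain ⟨v, hv, hvu⟩ := (mem_lamExact hab hb).1 (twist_mem_lamExact hab hb hu)
    refine ⟨lam [a] v + lam [b] u, (mem_Zx hab hb).2 ⟨add_mem (lam_mem_Cnx a hv)
      (lam_mem_Cnx b (lamExact_le_Cnx hab hb hu)), ?_⟩, ?_⟩
    · rw [map_add, substD_lam_of_ne a hb hab, substD_lam_self a hb, hvu,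
        substD_eq_zero_of_mem_lamExact hab hb hu, map_zero]
      abel
    · rw [map_add, strip_lam_of_ne hab, strip_lam_self, zero_add]

lemma mem_Zx_inf_ker_strip (hab : a ≠ b) (hb : par r b = 1) :
    u ∈ Zx r a b x (n + 1) ⊓ ker (strip b) ↔
      u ∈ Cnx m (n + 1) x ∧ ∀ i, strip i u ∈ if i = b then ⊥ else Zx r a b x n := by
  rw [mem_inf, mem_Zx hab hb, LinearMap.mem_ker, and_assoc]
  refine and_congr_right fun hu => ⟨fun ⟨Du, hub⟩ i => ?_, fun h => ?_⟩
  · split_ifs with hi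
    · rw [hi, hub]; exact zero_mem _
    · exact (mem_Zx hab hb).2
        ⟨strip_mem_Cnx i hu, by rw [← strip_substD hab hb hub, Du, map_zero]⟩
  · have hub : strip b u = 0 := by simpa using h b
    refine ⟨eq_zero_of_strip_eq_zero (substD_mem_Cnx a hb hu) fun i => ?_, hub⟩
    rw [strip_substD hab hb hub]
    rcases eq_or_ne i b with rfl | hi
    · rw [hub, map_zero]
    · exact ((mem_Zx hab hb).1 (by simpa [hi] using h i)).2

lemma finrank_Zx_succ (hab : a ≠ b) (hb : par r b = 1) :
    Module.finrank ℂ (Zx r a b x (n + 1)) =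
      (m - 1) * Module.finrank ℂ (Zx r a b x n) + Module.finrank ℂ (lamExact r a b x n) := by
  rw [← finrank_map_add_finrank_inf_ker _ (strip b), map_strip_Zx hab hb,
    finrank_eq_sum_of_strip (fun i => ?_) fun u => mem_Zx_inf_ker_strip hab hb,
    ← Finset.add_sum_erase _ _ (Finset.mem_univ b), Finset.sum_congr rfl fun i hi => by
      rw [if_neg (Finset.ne_of_mem_erase hi)], if_pos rfl, finrank_bot]
  · simp [add_comm]
  · split_ifs
    exacts [bot_le, Zx_le_Cnx]

lemma lam_mem_Bx (hab : a ≠ b) (hb : par r b = 1) {i : Fin m} (hi : i ≠ b)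
    (hu : u ∈ Bx r a b x n) : lam [i] u ∈ Bx r a b x (n + 1) := by
  cases n with
  | zero => rw [(mem_bot ℂ).1 hu, map_zero]; exact zero_mem _
  | succ n =>
    obtain ⟨v, hv, rfl⟩ := (mem_Bx_succ hab hb).1 hu
    exact (mem_Bx_succ hab hb).2 ⟨lam [i] v, lam_mem_Cnx i hv, substD_lam_of_ne a hb hi v⟩

lemma strip_mem_Bx (hab : a ≠ b) (hb : par r b = 1) {i : Fin m} (hi : i ≠ a)
    (hu : u ∈ Bx r a b x (n + 1)) : strip i u ∈ Bx r a b x n := by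
  obtain ⟨v, hv, rfl⟩ := (mem_Bx_succ hab hb).1 hu
  cases n with
  | zero => rw [substD_eq_zero r a b hv, map_zero]; exact zero_mem _
  | succ n =>
    rw [strip_substD_of_ne hb hi]
    exact (mem_Bx_succ hab hb).2 ⟨strip i v, strip_mem_Cnx i hv, rfl⟩

lemma map_strip_Bx (hab : a ≠ b) (hb : par r b = 1) :
    (Bx r a b x (n + 1)).map (strip b) = Bx r a b x n := by
  refine le_antisymm (map_le_iff_le_comap.2 fun u hu => strip_mem_Bx hab hb hab.symm hu)
    fun u hu => ?_
  cases n with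
  | zero => rw [(mem_bot ℂ).1 hu]; exact zero_mem _
  | succ n =>
    obtain ⟨v, hv, rfl⟩ := (mem_Bx_succ hab hb).1 hu
    refine ⟨substD r a b (lam [b] v), (mem_Bx_succ hab hb).2 ⟨_, lam_mem_Cnx b hv, rfl⟩, ?_⟩
    rw [strip_substD_of_ne hb hab.symm, strip_lam_self]

lemma mem_Bx_inf_ker_strip (hab : a ≠ b) (hb : par r b = 1) :
    u ∈ Bx r a b x (n + 1) ⊓ ker (strip b) ↔
      u ∈ Cnx m (n + 1) x ∧
        ∀ i, strip i u ∈ if i = b then ⊥ else if i = a then lamExact r a b x n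
          else Bx r a b x n := by
  refine ⟨fun ⟨hu, hub⟩ => ⟨Bx_le_Cnx hab hb hu, fun i => ?_⟩, fun ⟨u_mem, h⟩ => ?_⟩
  · split_ifs with hib hia
    · rw [hib]; exact hub
    · have split := Finset.add_sum_erase Finset.univ (fun i => lam [i] (strip i u))
        (Finset.mem_univ a)
      rw [sum_lam_strip (Bx_le_Cnx hab hb hu)] at split
      rw [hia, lamExact, mem_comap, eq_sub_of_add_eq split]
      refine sub_mem hu (sum_mem fun j hj => ?_)
      rcases eq_or_ne j b with rfl | hjb
      · rw [hub, map_zero]; exact zero_mem _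
      · exact lam_mem_Bx hab hb hjb (strip_mem_Bx hab hb (Finset.ne_of_mem_erase hj) hu)
    · exact strip_mem_Bx hab hb hia hu
  · have hub : strip b u = 0 := by simpa using h b
    refine ⟨?_, hub⟩
    rw [← sum_lam_strip u_mem]
    refine sum_mem fun i _ => ?_
    specialize h i
    split_ifs at h with hib hia
    · rw [(mem_bot ℂ).1 h, map_zero]; exact zero_mem _
    · exact hia ▸ h
    · exact lam_mem_Bx hab hb hib h

lemma finrank_Bx_succ (hab : a ≠ b) (hb : par r b = 1) :
    Module.finrank ℂ (Bx r a b x (n + 1)) =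
      (m - 1) * Module.finrank ℂ (Bx r a b x n) + Module.finrank ℂ (lamExact r a b x n) := by
  have : FiniteDimensional ℂ (Bx r a b x (n + 1)) := finiteDimensional_of_le (Bx_le_Cnx hab hb)
  have card : m - 1 = m - 2 + 1 := by have := a.2; have := b.2; omega
  rw [← finrank_map_add_finrank_inf_ker _ (strip b), map_strip_Bx hab hb,
    finrank_eq_sum_of_strip (fun i => ?_) fun u => mem_Bx_inf_ker_strip hab hb,
    ← Finset.add_sum_erase _ _ (Finset.mem_univ b),
    ← Finset.add_sum_erase _ _ (Finset.mem_erase.2 ⟨hab, Finset.mem_univ a⟩),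
    Finset.sum_congr rfl fun i hi => by
      rw [if_neg (Finset.ne_of_mem_erase (Finset.mem_of_mem_erase hi)),
        if_neg (Finset.ne_of_mem_erase hi)],
    if_pos rfl, if_neg hab, if_pos rfl, finrank_bot]
  · rw [Finset.sum_const, Finset.card_erase_of_mem (Finset.mem_erase.2 ⟨hab, Finset.mem_univ a⟩),
      Finset.card_erase_of_mem (Finset.mem_univ b), Finset.card_univ, Fintype.card_fin, card,
      Nat.add_sub_cancel, smul_eq_mul]
    ring
  · split_ifs
    exacts [bot_le, lamExact_le_Cnx hab hb, Bx_le_Cnx hab hb]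

lemma finrank_Zx_eq (hab : a ≠ b) (hb : par r b = 1) (n : ℕ) :
    Module.finrank ℂ (Zx r a b x n) = (m - 1) ^ n + Module.finrank ℂ (Bx r a b x n) := by
  induction n with
  | zero =>
    have : Zx r a b x 0 = Cnx m 0 x :=
      le_antisymm Zx_le_Cnx fun u hu => (mem_Zx hab hb).2 ⟨hu, substD_eq_zero r a b hu⟩
    rw [this, finrank_Cnx_zero, pow_zero, Bx, finrank_bot]
  | succ n ih =>
    rw [finrank_Zx_succ hab hb, finrank_Bx_succ hab hb, ih]
    ring

theorem finrank_Hx (hab : a ≠ b) (hb : par r b = 1) (x : Fin m) (n : ℕ) :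
    Module.finrank ℂ (Hx r a b x n) = (m - 1) ^ n := by
  have := Submodule.finrank_quotient_add_finrank ((Bx r a b x n).comap (Zx r a b x n).subtype)
  rw [(comapSubtypeEquivOfLe (Bx_le_Zx hab hb)).finrank_eq, finrank_Zx_eq hab hb] at this
  exact Nat.add_right_cancel this

end Dimension

section ConeComplex

variable {m r : ℕ} {a b : Fin m} {n : ℕ} {u η w z : Cochain m}

lemma Zm_eq_Zx (hab : a ≠ b) (n : ℕ) : Zm r a b n = Zx r a b b n := by
  rw [Zm, Zx, Dx, if_neg hab.symm]

lemma Bm_eq_Bx (hab : a ≠ b) (n : ℕ) : Bm r a b n = Bx r a b b n := by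
  cases n with
  | zero => rfl
  | succ n => rw [Bm, Bx, Dx, if_neg hab.symm]

lemma finrank_Hm (hab : a ≠ b) (hb : par r b = 1) (n : ℕ) :
    Module.finrank ℂ (Hm r a b n) = (m - 1) ^ n := by
  unfold Hm
  rw [Zm_eq_Zx hab, Bm_eq_Bx hab, finrank_Hx hab hb]

instance : FiniteDimensional ℂ (Zm r a b n) :=
  finiteDimensional_of_le (inf_le_left : _ ≤ Cnx m n b)

lemma mem_Zm (hab : a ≠ b) (hb : par r b = 1) :
    u ∈ Zm r a b n ↔ u ∈ Cnx m n b ∧ substD r a b u = 0 := by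
  rw [Zm_eq_Zx hab, mem_Zx hab hb]

lemma mem_Bm_succ (hab : a ≠ b) (hb : par r b = 1) :
    u ∈ Bm r a b (n + 1) ↔ ∃ v ∈ Cnx m n b, substD r a b v = u := by
  rw [Bm_eq_Bx hab, mem_Bx_succ hab hb]

lemma mem_Cpair :
    z ∈ Cpair m a b n ↔ ∃ u ∈ Cnx m n b, ∃ η ∈ Cnx m n b, moveOut b a u + η = z := by
  refine mem_sup.trans ⟨fun ⟨φ, hφ, η, hη, h⟩ => ?_, fun ⟨u, hu, η, hη, h⟩ => ?_⟩
  · exact ⟨moveOut a b φ, moveOut_mem_Cnx b hφ, η, hη, by rwa [moveOut_moveOut b hφ]⟩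
  · exact ⟨moveOut b a u, moveOut_mem_Cnx a hu, η, hη, h⟩

lemma moveOut_pair (hab : a ≠ b) (hu : u ∈ Cnx m n b) (hη : η ∈ Cnx m n b) :
    moveOut a b (moveOut b a u + η) = u := by
  rw [map_add, moveOut_moveOut a hu, moveOut_eq_zero b hab.symm hη, add_zero]

lemma ne_of_par (ha : par r a = 0) (hb : par r b = 1) : a ≠ b := by
  rintro rfl
  omega

lemma Dop_pair (ha : par r a = 0) (hb : par r b = 1) (hu : u ∈ Cnx m n b) (hη : η ∈ Cnx m n b) :
    Dop r a b (moveOut b a u + η) =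
      -moveOut b a (substD r a b u) + (lamAddRho r a u + substD r a b η) := by
  rw [Dop_eq ha, moveOut_pair (ne_of_par ha hb) hu hη, map_add, moveOut_substD hb (by omega)]
  abel

lemma Dop_pair_eq_iff (ha : par r a = 0) (hb : par r b = 1) (hu : u ∈ Cnx m n b)
    (hη : η ∈ Cnx m n b) (hw : w ∈ Cnx m (n + 1) b) :
    Dop r a b (moveOut b a u + η) = w ↔
      substD r a b u = 0 ∧ lamAddRho r a u + substD r a b η = w := by
  rw [Dop_pair ha hb hu hη]
  refine ⟨fun h => ?_, fun ⟨Du, h⟩ => by rw [Du, map_zero, neg_zero, zero_add, h]⟩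
  have Du : substD r a b u = 0 := by
    have := congrArg (moveOut a b) h
    rwa [← map_neg, moveOut_pair (ne_of_par ha hb) (neg_mem (substD_mem_Cnx a hb hu))
      (add_mem (lamAddRho_mem_Cnx r a hu) (substD_mem_Cnx a hb hη)),
      moveOut_eq_zero b (ne_of_par ha hb).symm hw, neg_eq_zero] at this
  exact ⟨Du, by rwa [Du, map_zero, neg_zero, zero_add] at h⟩

lemma mem_Zpair (ha : par r a = 0) (hb : par r b = 1) :
    z ∈ Zpair r a b n ↔ ∃ u ∈ Cnx m n b, ∃ η ∈ Cnx m n b,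
      (substD r a b u = 0 ∧ lamAddRho r a u + substD r a b η = 0) ∧ moveOut b a u + η = z := by
  refine mem_inf.trans ⟨fun ⟨hz, Dz⟩ => ?_, ?_⟩
  · obtain ⟨u, hu, η, hη, rfl⟩ := mem_Cpair.1 hz
    exact ⟨u, hu, η, hη, (Dop_pair_eq_iff ha hb hu hη (zero_mem _)).1 Dz, rfl⟩
  · rintro ⟨u, hu, η, hη, h, rfl⟩
    exact ⟨mem_Cpair.2 ⟨u, hu, η, hη, rfl⟩, (Dop_pair_eq_iff ha hb hu hη (zero_mem _)).2 h⟩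

lemma moveOut_mem_Zm (ha : par r a = 0) (hb : par r b = 1) (hz : z ∈ Zpair r a b n) :
    moveOut a b z ∈ Zm r a b n := by
  obtain ⟨u, hu, η, hη, ⟨Du, -⟩, rfl⟩ := (mem_Zpair ha hb).1 hz
  rw [moveOut_pair (ne_of_par ha hb) hu hη]
  exact (mem_Zm (ne_of_par ha hb) hb).2 ⟨hu, Du⟩

lemma moveOut_mem_Bm (ha : par r a = 0) (hb : par r b = 1) (hz : z ∈ Bpair r a b n) :
    moveOut a b z ∈ Bm r a b n := by
  cases n with
  | zero => rw [(mem_bot ℂ).1 hz, map_zero]; exact zero_mem _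
  | succ n =>
    obtain ⟨_, hy, rfl⟩ := hz
    obtain ⟨u, hu, η, hη, rfl⟩ := mem_Cpair.1 hy
    rw [Dop_pair ha hb hu hη, ← map_neg, ← map_neg, moveOut_pair (ne_of_par ha hb)
      (substD_mem_Cnx a hb (neg_mem hu))
      (add_mem (lamAddRho_mem_Cnx r a hu) (substD_mem_Cnx a hb hη))]
    exact (mem_Bm_succ (ne_of_par ha hb) hb).2 ⟨-u, neg_mem hu, rfl⟩

lemma lamAddRho_mem_Zm (ha : par r a = 0) (hb : par r b = 1) (hu : u ∈ Zm r a b n) :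
    lamAddRho r a u ∈ Zm r a b (n + 1) := by
  rw [mem_Zm (ne_of_par ha hb) hb] at hu ⊢
  exact ⟨lamAddRho_mem_Cnx r a hu.1, by rw [substD_lamAddRho ha hb, hu.2, map_zero]⟩

lemma lamAddRho_mem_Bm (ha : par r a = 0) (hb : par r b = 1) (hu : u ∈ Bm r a b n) :
    lamAddRho r a u ∈ Bm r a b (n + 1) := by
  cases n with
  | zero => rw [(mem_bot ℂ).1 hu, map_zero]; exact zero_mem _
  | succ n =>
    obtain ⟨v, hv, rfl⟩ := (mem_Bm_succ (ne_of_par ha hb) hb).1 hu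
    exact (mem_Bm_succ (ne_of_par ha hb) hb).2
      ⟨lamAddRho r a v, lamAddRho_mem_Cnx r a hv, substD_lamAddRho ha hb v⟩

lemma exists_moveOut_sub_mem_Bpair (ha : par r a = 0) (hb : par r b = 1) (hu : u ∈ Bm r a b n) :
    ∃ w ∈ Cnx m n b, moveOut b a u - w ∈ Bpair r a b n ∧ substD r a b w = lamAddRho r a u := by
  cases n with
  | zero =>
    obtain rfl := (mem_bot ℂ).1 hu
    exact ⟨0, zero_mem _, by simp, by simp⟩
  | succ n =>
    obtain ⟨v, hv, rfl⟩ := (mem_Bm_succ (ne_of_par ha hb) hb).1 hu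
    refine ⟨lamAddRho r a v, lamAddRho_mem_Cnx r a hv,
      ⟨moveOut b a (-v) + 0, mem_Cpair.2 ⟨-v, neg_mem hv, 0, zero_mem _, rfl⟩, ?_⟩,
      substD_lamAddRho ha hb v⟩
    rw [Dop_pair ha hb (neg_mem hv) (zero_mem _)]
    simp only [map_neg, neg_neg, map_zero, add_zero, sub_eq_add_neg]

lemma iotaHm_mk_eq_zero {u : Zm r a b n} :
    iotaHm r a b n (Submodule.Quotient.mk u) = 0 ↔ (u : Cochain m) ∈ Bpair r a b n :=
  Submodule.Quotient.mk_eq_zero _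

end ConeComplex

section Maps

variable {m r : ℕ} {a b : Fin m} (ha : par r a = 0) (hb : par r b = 1) (n : ℕ)

/-- The map `H^n → H^n_b` sending the class of a cocycle `φ + η` to the class of `τ(φ)`. -/
noncomputable def moveOutH : Hpair r a b n →ₗ[ℂ] Hm r a b n :=
  mapQ _ _ ((moveOut a b).restrict fun _ => moveOut_mem_Zm ha hb) fun _ => moveOut_mem_Bm ha hb

/-- The map `H^n_b → H^{n+1}_b` induced by `λ^{(a)} + ρ^{(a)}`. -/
noncomputable def lamAddRhoH : Hm r a b n →ₗ[ℂ] Hm r a b (n + 1) :=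
  mapQ _ _ ((lamAddRho r a).restrict fun _ => lamAddRho_mem_Zm ha hb) fun _ =>
    lamAddRho_mem_Bm ha hb

variable {n} in
lemma moveOutH_mk_eq_zero {z : Zpair r a b n} :
    moveOutH ha hb n (Submodule.Quotient.mk z) = 0 ↔ moveOut a b z ∈ Bm r a b n :=
  Submodule.Quotient.mk_eq_zero _

variable {n} in
lemma lamAddRhoH_mk_eq_zero {u : Zm r a b n} :
    lamAddRhoH ha hb n (Submodule.Quotient.mk u) = 0 ↔ lamAddRho r a u ∈ Bm r a b (n + 1) :=
  Submodule.Quotient.mk_eq_zero _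

lemma ker_moveOutH : ker (moveOutH ha hb n) = Hfhat r a b n := by
  have hab := ne_of_par ha hb
  apply le_antisymm
  · intro h hh
    obtain ⟨⟨z, hz⟩, rfl⟩ := Submodule.Quotient.mk_surjective _ h
    obtain ⟨u, hu, η, hη, ⟨-, hL⟩, rfl⟩ := (mem_Zpair ha hb).1 hz
    rw [LinearMap.mem_ker, moveOutH_mk_eq_zero, moveOut_pair hab hu hη] at hh
    obtain ⟨w, hw, homologous, Dw⟩ := exists_moveOut_sub_mem_Bpair ha hb hh
    refine ⟨Submodule.Quotient.mk ⟨w + η, (mem_Zm hab hb).2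
      ⟨add_mem hw hη, by rw [map_add, Dw, hL]⟩⟩, ((Submodule.Quotient.eq _).2 ?_).symm⟩
    change moveOut b a u + η - (w + η) ∈ Bpair r a b n
    rwa [add_sub_add_right_eq_sub]
  · rintro _ ⟨h, rfl⟩
    obtain ⟨⟨w, hw⟩, rfl⟩ := Submodule.Quotient.mk_surjective _ h
    exact (moveOutH_mk_eq_zero ha hb).2 <|
      (moveOut_eq_zero b hab.symm hw.1).symm ▸ zero_mem (Bm r a b n)

lemma range_moveOutH : range (moveOutH ha hb n) = ker (lamAddRhoH ha hb n) := by
  have hab := ne_of_par ha hb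
  apply le_antisymm
  · rintro _ ⟨h, rfl⟩
    obtain ⟨⟨z, hz⟩, rfl⟩ := Submodule.Quotient.mk_surjective _ h
    obtain ⟨u, hu, η, hη, ⟨-, hL⟩, rfl⟩ := (mem_Zpair ha hb).1 hz
    refine (lamAddRhoH_mk_eq_zero ha hb).2 ?_
    change lamAddRho r a (moveOut a b (moveOut b a u + η)) ∈ Bm r a b (n + 1)
    rw [moveOut_pair hab hu hη, eq_neg_of_add_eq_zero_left hL, ← map_neg]
    exact (mem_Bm_succ hab hb).2 ⟨-η, neg_mem hη, rfl⟩
  · intro h hh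
    obtain ⟨⟨u, hu⟩, rfl⟩ := Submodule.Quotient.mk_surjective _ h
    obtain ⟨u_mem, Du⟩ := (mem_Zm hab hb).1 hu
    obtain ⟨v, hv, hvu⟩ := (mem_Bm_succ hab hb).1 ((lamAddRhoH_mk_eq_zero ha hb).1 hh)
    have cocycle : moveOut b a u + -v ∈ Zpair r a b n := (mem_Zpair ha hb).2
      ⟨u, u_mem, -v, neg_mem hv, ⟨Du, by rw [map_neg, hvu, add_neg_cancel]⟩, rfl⟩
    exact ⟨Submodule.Quotient.mk ⟨_, cocycle⟩,
      congrArg Submodule.Quotient.mk (Subtype.ext (moveOut_pair hab u_mem (neg_mem hv)))⟩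

lemma range_lamAddRhoH : range (lamAddRhoH ha hb n) = ker (iotaHm r a b (n + 1)) := by
  have hab := ne_of_par ha hb
  apply le_antisymm
  · rintro _ ⟨h, rfl⟩
    obtain ⟨⟨u, hu⟩, rfl⟩ := Submodule.Quotient.mk_surjective _ h
    obtain ⟨u_mem, Du⟩ := (mem_Zm hab hb).1 hu
    refine iotaHm_mk_eq_zero.2 ⟨moveOut b a u + 0,
      mem_Cpair.2 ⟨u, u_mem, 0, zero_mem _, rfl⟩, ?_⟩
    exact (Dop_pair_eq_iff ha hb u_mem (zero_mem _) (lamAddRho_mem_Cnx r a u_mem)).2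
      ⟨Du, by rw [map_zero, add_zero]⟩
  · intro h hh
    obtain ⟨⟨w, hw⟩, rfl⟩ := Submodule.Quotient.mk_surjective _ h
    obtain ⟨z, hz, Dz⟩ := iotaHm_mk_eq_zero.1 hh
    obtain ⟨u, hu, η, hη, rfl⟩ := mem_Cpair.1 hz
    obtain ⟨Du, hL⟩ := (Dop_pair_eq_iff ha hb hu hη hw.1).1 Dz
    refine ⟨Submodule.Quotient.mk ⟨u, (mem_Zm hab hb).2 ⟨hu, Du⟩⟩,
      (Submodule.Quotient.eq _).2 ((mem_Bm_succ hab hb).2 ⟨-η, neg_mem hη, ?_⟩)⟩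
    change substD r a b (-η) = lamAddRho r a u - w
    rw [map_neg, ← hL]
    abel

/-- The injection `Ĥ^n_e → H^n_b` induced by `H^n → H^n_b`. -/
noncomputable def moveOutHehat : Hehat r a b n →ₗ[ℂ] Hm r a b n :=
  (Hfhat r a b n).liftQ (moveOutH ha hb n) (ker_moveOutH ha hb n).ge

lemma moveOutHehat_injective : Function.Injective (moveOutHehat ha hb n) :=
  LinearMap.ker_eq_bot.1 (ker_liftQ_eq_bot _ _ _ (ker_moveOutH ha hb n).le)

lemma range_moveOutHehat : range (moveOutHehat ha hb n) = ker (lamAddRhoH ha hb n) :=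
  (range_liftQ _ _ _).trans (range_moveOutH ha hb n)

lemma range_lamAddRhoH_eq_ker_rangeRestrict :
    range (lamAddRhoH ha hb n) = ker (iotaHm r a b (n + 1)).rangeRestrict := by
  rw [ker_rangeRestrict, range_lamAddRhoH]

end Maps

theorem finrank_Hfhat_succ {m r : ℕ} {a b : Fin m} (ha : par r a = 0) (hb : par r b = 1) (n : ℕ) :
    Module.finrank ℂ (Hfhat r a b (n + 1)) =
      Module.finrank ℂ (Hehat r a b n) + (m - 2) * (m - 1) ^ n := by
  have hab := ne_of_par ha hb
  have dims : Module.finrank ℂ (Hfhat r a b (n + 1)) + Module.finrank ℂ (Hm r a b n) =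
      Module.finrank ℂ (Hehat r a b n) + Module.finrank ℂ (Hm r a b (n + 1)) :=
    finrank_add_finrank_of_exact (moveOutHehat_injective ha hb n) (range_moveOutHehat ha hb n)
      (range_lamAddRhoH_eq_ker_rangeRestrict ha hb n) (surjective_rangeRestrict _)
  have pred : m - 1 = m - 2 + 1 := by have := a.2; have := b.2; omega
  rw [finrank_Hm hab hb, finrank_Hm hab hb, pred] at dims
  rw [pred]
  linarith [pow_succ' (m - 2 + 1) n]

theorem exact_sequence_general {m r : ℕ} {a b : Fin m} (ha : par r a = 0) (hb : par r b = 1)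
    (n : ℕ) :
    ∃ (α : Hehat r a b n →ₗ[ℂ] Hm r a b n)
      (β : Hm r a b n →ₗ[ℂ] Hm r a b (n + 1))
      (γ : Hm r a b (n + 1) →ₗ[ℂ] Hfhat r a b (n + 1)),
      Function.Injective α ∧
      range α = ker β ∧
      range β = ker γ ∧
      Function.Surjective γ ∧
      (∀ z : Zpair r a b n, ∃ w : Zm r a b n,
        (w : Cochain m) = tau a b (projOut a (z : Cochain m)) ∧
        α (Submodule.Quotient.mk (Submodule.Quotient.mk z)) = Submodule.Quotient.mk w) ∧
      (∀ w : Zm r a b n, ∃ w' : Zm r a b (n + 1),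
        (w' : Cochain m) = (lam [a] + rho r [a]) (w : Cochain m) ∧
        β (Submodule.Quotient.mk w) = Submodule.Quotient.mk w') ∧
      (∀ h : Hm r a b (n + 1), (γ h : Hpair r a b (n + 1)) = iotaHm r a b (n + 1) h) ∧
      Module.finrank ℂ (Hfhat r a b (n + 1)) =
        Module.finrank ℂ (Hehat r a b n) + (m - 2) * (m - 1) ^ n :=
  ⟨moveOutHehat ha hb n, lamAddRhoH ha hb n, (iotaHm r a b (n + 1)).rangeRestrict,
    moveOutHehat_injective ha hb n, range_moveOutHehat ha hb n,
    range_lamAddRhoH_eq_ker_rangeRestrict ha hb n, surjective_rangeRestrict _,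
    fun _ => ⟨_, rfl, rfl⟩, fun _ => ⟨_, rfl, rfl⟩, fun _ => rfl, finrank_Hfhat_succ ha hb n⟩

/-- the exact sequence
`0 → Ĥ^n_e → H^n_m → H^{n+1}_m → Ĥ^{n+1}_f → 0`, where the first map sends the class of a
`D`-cocycle `φ + η` to the class of `τ(φ)`, the second is induced by `λ^{e₁} + ρ^{e₁}`, and
the third is the natural surjection onto `Ĥ^{n+1}_f`; consequently
`dim Ĥ^{n+1}_f = dim Ĥ^n_e + (r+s−2)(r+s−1)^n`. -/
theorem exact_sequence (r s : ℕ) (hr : 1 ≤ r) (hs : 1 ≤ s)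
    (e1 fs : Fin (r + s)) (he1 : (e1 : ℕ) = 0) (hfs : (fs : ℕ) = r + s - 1) :
    ∀ n : ℕ,
      ∃ (α : Hehat r e1 fs n →ₗ[ℂ] Hm r e1 fs n)
        (β : Hm r e1 fs n →ₗ[ℂ] Hm r e1 fs (n + 1))
        (γ : Hm r e1 fs (n + 1) →ₗ[ℂ] Hfhat r e1 fs (n + 1)),
        Function.Injective α ∧
        LinearMap.range α = LinearMap.ker β ∧
        LinearMap.range β = LinearMap.ker γ ∧
        Function.Surjective γ ∧
        (∀ z : Zpair r e1 fs n, ∃ w : Zm r e1 fs n,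
          (w : Cochain (r + s)) = tau e1 fs (projOut e1 (z : Cochain (r + s))) ∧
          α (Submodule.Quotient.mk (Submodule.Quotient.mk z)) = Submodule.Quotient.mk w) ∧
        (∀ w : Zm r e1 fs n, ∃ w' : Zm r e1 fs (n + 1),
          (w' : Cochain (r + s)) = (lam [e1] + rho r [e1]) (w : Cochain (r + s)) ∧
          β (Submodule.Quotient.mk w) = Submodule.Quotient.mk w') ∧
        (∀ h : Hm r e1 fs (n + 1), (γ h : Hpair r e1 fs (n + 1)) = iotaHm r e1 fs (n + 1) h) ∧
        Module.finrank ℂ (Hfhat r e1 fs (n + 1)) =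
          Module.finrank ℂ (Hehat r e1 fs n) + (r + s - 2) * (r + s - 1) ^ n := by
  intro n
  exact exact_sequence_general (if_pos (by omega)) (if_neg (by omega)) n

end NilpotentCohomology
end

section
/- For every n ≥ 0, dim_ℂ Ĥ^n_e + dim_ℂ Ĥ^n_f = (r+s−1)^n if n ≡ 0 or 1 (mod 4), and dim_ℂ Ĥ^n_e + dim_ℂ Ĥ^n_f = (r+s−1)^n + 1 if n ≡ 2 or 3 (mod 4). -/
open Finsupp Submodule LinearMap

set_option maxSynthPendingDepth 2

namespace NilpotentCohomology

/-!
The complex is the mapping cone of the commutator `u ↦ u a + a u` acting on the free algebra with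
its skew derivation `∂`, `∂ b = a²`; the two summands are the outputs `a` and `b`. Hence the
dimension of the cocycles is `dim ker ∂` plus the dimension of the space of `u ∈ ker ∂` such that
`u a + a u` is a coboundary. Splitting words by their last letter gives a recursion for the first
dimension. For the second, every element of `ker ∂` is, up to coboundaries, of the form
`u θ + ∑ c, g_c c + (∑ c, h_c c) a` with `θ = a b - b a` and `c` running over the letters other
than `a` and `b`. Since `a θ + θ a = a² b - b a²` is `-∂ (b²)`, right multiplication by `θ` carries
the condition on `u a - a u` to the condition on `u a + a u`, and vice versa: two such steps restore
the sign, which is the period `4`.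
-/

section LinearAlgebra

variable {K V W X : Type*} [Field K] [AddCommGroup V] [Module K V] [AddCommGroup W] [Module K W]
  [AddCommGroup X] [Module K X]

lemma finrank_submodule_prod [FiniteDimensional K V] [FiniteDimensional K W]
    (p : Submodule K V) (q : Submodule K W) :
    Module.finrank K (p.prod q) = Module.finrank K p + Module.finrank K q := by
  have h := LinearMap.finrank_range_of_inj (f := p.subtype.prodMap q.subtype)
    (Function.Injective.prodMap p.injective_subtype q.injective_subtype)
  rwa [LinearMap.range_prodMap, range_subtype, range_subtype, Module.finrank_prod] at h

lemma finrank_submodule_pi (ι : Type*) [Fintype ι] (p : Submodule K V) [FiniteDimensional K p] :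
    Module.finrank K (Submodule.pi Set.univ fun _ : ι => p) =
      Fintype.card ι * Module.finrank K p := by
  have hr : LinearMap.range (p.subtype.compLeft ι) = Submodule.pi Set.univ fun _ => p := by
    ext g
    refine ⟨?_, fun hg => ⟨fun i => ⟨g i, hg i trivial⟩, rfl⟩⟩
    rintro ⟨g, rfl⟩ i -
    exact (g i).2
  rw [← hr, LinearMap.finrank_range_of_inj (p.injective_subtype.comp_left),
    Module.finrank_pi_fintype, Finset.sum_const, Finset.card_univ, smul_eq_mul]

variable [FiniteDimensional K V]

lemma finrank_map_add_finrank_inf_ker_s17 (f : V →ₗ[K] X) (P : Submodule K V) :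
    Module.finrank K (P.map f) + Module.finrank K ↥(P ⊓ LinearMap.ker f) = Module.finrank K P := by
  rw [← LinearMap.finrank_range_add_finrank_ker (f.domRestrict P), LinearMap.range_domRestrict,
    LinearMap.ker_domRestrict, ← Submodule.finrank_map_subtype_eq, Submodule.map_comap_subtype]

lemma finrank_map_sup_add_finrank_inf_comap [FiniteDimensional K X] (f : V →ₗ[K] X)
    (P : Submodule K V) (N : Submodule K X) :
    Module.finrank K ↥(P.map f ⊔ N) + Module.finrank K ↥(P ⊓ N.comap f) =
      Module.finrank K N + Module.finrank K P := by
  have hsup := Submodule.finrank_sup_add_finrank_inf_eq (P.map f) N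
  have hP := finrank_map_add_finrank_inf_ker_s17 f P
  have hinf := finrank_map_add_finrank_inf_ker_s17 f (P ⊓ N.comap f)
  rw [← Submodule.map_inf_eq_map_inf_comap, inf_assoc,
    inf_eq_right.2 (LinearMap.ker_le_comap f)] at hinf
  omega

lemma finrank_prod_top_inf_ker_coprod [FiniteDimensional K W] [FiniteDimensional K X]
    (f : V →ₗ[K] X) (g : W →ₗ[K] X) (P : Submodule K V) :
    Module.finrank K ↥(P.prod ⊤ ⊓ LinearMap.ker (f.coprod g)) =
      Module.finrank K ↥(P ⊓ (LinearMap.range g).comap f) + Module.finrank K (LinearMap.ker g) := by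
  have htotal := finrank_map_add_finrank_inf_ker_s17 (f.coprod g) (P.prod ⊤)
  rw [LinearMap.map_coprod_prod, Submodule.map_top, finrank_submodule_prod, finrank_top] at htotal
  have hsup := finrank_map_sup_add_finrank_inf_comap f P (LinearMap.range g)
  have hg := LinearMap.finrank_range_add_finrank_ker g
  omega

end LinearAlgebra

section FreeAlgebra

/-- The degree-`n` component of the free algebra `K⟨α⟩`, a homogeneous noncommutative polynomial
being encoded by its coefficient function on words of length `n`. -/
abbrev FreeDeg (K α : Type*) (n : ℕ) : Type _ := (Fin n → α) → K

variable {K α : Type*} [Field K] {n : ℕ}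

/-- The coefficient `u_x` in the decomposition `u = ∑ x, u_x x` by last letters. -/
def lastCoeff (x : α) : FreeDeg K α (n + 1) →ₗ[K] FreeDeg K α n :=
  LinearMap.funLeft K K fun f => Fin.snoc f x

/-- The element `∑ x, u_x x` with prescribed last-letter coefficients. -/
def ofLast : (α → FreeDeg K α n) →ₗ[K] FreeDeg K α (n + 1) where
  toFun g f := g (f (Fin.last n)) (Fin.init f)
  map_add' _ _ := rfl
  map_smul' _ _ := rfl

@[simp]
lemma lastCoeff_ofLast (x : α) (g : α → FreeDeg K α n) : lastCoeff x (ofLast g) = g x := by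
  ext f
  simp [lastCoeff, ofLast, LinearMap.funLeft_apply]

lemma ext_lastCoeff {u v : FreeDeg K α (n + 1)} (h : ∀ x, lastCoeff x u = lastCoeff x v) :
    u = v := by
  ext f
  rw [← Fin.snoc_init_self f]
  exact congrFun (h _) _

lemma finrank_freeDeg [Fintype α] (n : ℕ) :
    Module.finrank K (FreeDeg K α n) = Fintype.card α ^ n := by
  rw [Module.finrank_fintype_fun_eq_card, Fintype.card_fun, Fintype.card_fin]

lemma finrank_freeDeg_zero : Module.finrank K (FreeDeg K α 0) = 1 := by
  rw [Module.finrank_fintype_fun_eq_card, Fintype.card_unique]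

variable [DecidableEq α]

/-- Right multiplication `u ↦ u x` by a letter. -/
def mulR (x : α) : FreeDeg K α n →ₗ[K] FreeDeg K α (n + 1) :=
  ofLast ∘ₗ LinearMap.single K (fun _ => FreeDeg K α n) x

/-- Left multiplication `u ↦ x u` by a letter. -/
def mulL (x : α) : ∀ {n : ℕ}, FreeDeg K α n →ₗ[K] FreeDeg K α (n + 1)
  | 0 => mulR x
  | _ + 1 => ofLast ∘ₗ LinearMap.pi fun y => mulL x ∘ₗ lastCoeff y

@[simp]
lemma lastCoeff_mulR_self (x : α) (u : FreeDeg K α n) : lastCoeff x (mulR x u) = u := by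
  simp [mulR]

lemma lastCoeff_mulR_of_ne {x y : α} (h : y ≠ x) (u : FreeDeg K α n) :
    lastCoeff y (mulR x u) = 0 := by
  simp [mulR, h]

@[simp]
lemma lastCoeff_mulL (x y : α) (u : FreeDeg K α (n + 1)) :
    lastCoeff y (mulL x u) = mulL x (lastCoeff y u) := by
  simp [mulL]

lemma mulL_zero_deg (x : α) (u : FreeDeg K α 0) : mulL x u = mulR x u := rfl

lemma mulR_injective (x : α) : Function.Injective (mulR x : FreeDeg K α n → _) :=
  Function.LeftInverse.injective (lastCoeff_mulR_self x)

lemma mulL_mulR (x y : α) (u : FreeDeg K α n) : mulL x (mulR y u) = mulR y (mulL x u) := by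
  refine ext_lastCoeff fun z => ?_
  obtain rfl | h := eq_or_ne z y
  · simp
  · simp [lastCoeff_mulR_of_ne h]

lemma mulR_single (x : α) (f : Fin n → α) :
    mulR x (Pi.single f 1 : FreeDeg K α n) = Pi.single (Fin.snoc f x) 1 := by
  ext g
  induction g using Fin.snocCases with
  | snoc g y =>
    change lastCoeff y (mulR x (Pi.single f 1)) g = _
    obtain rfl | h := eq_or_ne y x
    · simp [Pi.single_apply, Fin.snoc_inj]
    · simp [lastCoeff_mulR_of_ne h, Fin.snoc_inj, h]

lemma mulL_single (x : α) (f : Fin n → α) :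
    mulL x (Pi.single f 1 : FreeDeg K α n) = Pi.single (Fin.cons x f) 1 := by
  induction n with
  | zero =>
    rw [mulL_zero_deg, mulR_single]
    congr 1
    ext i
    rw [Fin.fin_one_eq_zero i]
    rfl
  | succ n ih =>
    induction f using Fin.snocCases with
    | snoc f y => rw [← mulR_single, mulL_mulR, ih, mulR_single, Fin.cons_snoc_eq_snoc_cons]

end FreeAlgebra

/-- The data defining the skew derivation `∂` of `K⟨α⟩` with `∂ b = a²` that kills all letters other
than `b` and picks up the factor `sign x` when it passes the letter `x` from the right. -/
structure SquareDatum (K α : Type*) [Field K] where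
  a : α
  b : α
  sign : α → Kˣ
  a_ne_b : a ≠ b
  sign_a : sign a = 1
  sign_b : sign b = -1

namespace SquareDatum

variable {K α : Type*} [Field K] (S : SquareDatum K α) {n : ℕ}

/-- The letters other than `a` and `b`. -/
abbrev Neutral : Type _ := {c : α // c ≠ S.a ∧ c ≠ S.b}

lemma ext_neutral {u v : FreeDeg K α (n + 1)}
    (hc : ∀ c : S.Neutral, lastCoeff c.1 u = lastCoeff c.1 v)
    (hb : lastCoeff S.b u = lastCoeff S.b v) (ha : lastCoeff S.a u = lastCoeff S.a v) : u = v := by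
  refine ext_lastCoeff fun x => ?_
  by_cases hxa : x = S.a
  · rw [hxa, ha]
  by_cases hxb : x = S.b
  · rw [hxb, hb]
  exact hc ⟨x, hxa, hxb⟩

variable [DecidableEq α]

/-- The skew derivation `∂`, determined by `∂ (u x) = sign x • (∂ u) x` for `x ≠ b` and
`∂ (u b) = u a² - (∂ u) b`. -/
def d : ∀ {n : ℕ}, FreeDeg K α n →ₗ[K] FreeDeg K α (n + 1)
  | 0 => 0
  | _ + 1 => ofLast ∘ₗ LinearMap.pi fun x =>
      (S.sign x : K) • d ∘ₗ lastCoeff x + if x = S.a then mulR S.a ∘ₗ lastCoeff S.b else 0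

@[simp]
lemma d_zero_deg (u : FreeDeg K α 0) : S.d u = 0 := rfl

lemma lastCoeff_d_of_ne {x : α} (hx : x ≠ S.a) (u : FreeDeg K α (n + 1)) :
    lastCoeff x (S.d u) = (S.sign x : K) • S.d (lastCoeff x u) := by
  simp [d, hx]

@[simp]
lemma lastCoeff_a_d (u : FreeDeg K α (n + 1)) :
    lastCoeff S.a (S.d u) = S.d (lastCoeff S.a u) + mulR S.a (lastCoeff S.b u) := by
  simp [d, S.sign_a]

@[simp]
lemma lastCoeff_b_d (u : FreeDeg K α (n + 1)) :
    lastCoeff S.b (S.d u) = -S.d (lastCoeff S.b u) := by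
  simp [S.lastCoeff_d_of_ne S.a_ne_b.symm, S.sign_b]

lemma d_mulR (x : α) (u : FreeDeg K α n) :
    S.d (mulR x u) = (S.sign x : K) • mulR x (S.d u) +
      if x = S.b then mulR S.a (mulR S.a u) else 0 := by
  refine ext_lastCoeff fun y => ?_
  rw [map_add, map_smul]
  obtain rfl | hy := eq_or_ne y S.a
  · rw [lastCoeff_a_d]
    by_cases hxa : x = S.a
    · subst hxa
      simp [lastCoeff_mulR_of_ne S.a_ne_b.symm, S.a_ne_b, S.sign_a]
    · rw [lastCoeff_mulR_of_ne (Ne.symm hxa), lastCoeff_mulR_of_ne (Ne.symm hxa)]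
      split_ifs with hxb
      · simp [hxb]
      · simp [lastCoeff_mulR_of_ne (Ne.symm hxb)]
  · have hsquare : lastCoeff y (if x = S.b then mulR S.a (mulR S.a u) else 0) = 0 := by
      split_ifs
      · exact lastCoeff_mulR_of_ne hy _
      · exact map_zero _
    rw [S.lastCoeff_d_of_ne hy, hsquare, add_zero]
    obtain rfl | hyx := eq_or_ne y x
    · simp
    · simp [lastCoeff_mulR_of_ne hyx]

@[simp]
lemma d_mulR_a (u : FreeDeg K α n) : S.d (mulR S.a u) = mulR S.a (S.d u) := by
  simp [S.d_mulR, S.a_ne_b, S.sign_a]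

@[simp]
lemma d_mulR_b (u : FreeDeg K α n) :
    S.d (mulR S.b u) = mulR S.a (mulR S.a u) - mulR S.b (S.d u) := by
  rw [d_mulR, if_pos rfl, S.sign_b]
  simp only [Units.val_neg, Units.val_one, neg_smul, one_smul]
  abel

@[simp]
lemma d_mulL_a (u : FreeDeg K α n) : S.d (mulL S.a u) = mulL S.a (S.d u) := by
  induction n with
  | zero => simp [mulL_zero_deg]
  | succ n ih =>
    refine ext_lastCoeff fun y => ?_
    obtain rfl | hy := eq_or_ne y S.a
    · simp [ih, mulL_mulR]
    · simp [S.lastCoeff_d_of_ne hy, ih]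

@[simp]
lemma d_d (u : FreeDeg K α n) : S.d (S.d u) = 0 := by
  induction n with
  | zero => simp
  | succ n ih =>
    refine ext_lastCoeff fun y => ?_
    obtain rfl | hy := eq_or_ne y S.a
    · simp [ih]
    · simp [S.lastCoeff_d_of_ne hy, ih]

/-- The homotopy `u ↦ b u`, with signs such that it anticommutes with `∂` up to `a² u`. -/
def mulLB : ∀ {n : ℕ}, FreeDeg K α n →ₗ[K] FreeDeg K α (n + 1)
  | 0 => mulR S.b
  | _ + 1 => ofLast ∘ₗ LinearMap.pi fun x => ((S.sign x)⁻¹ : Kˣ) • mulLB ∘ₗ lastCoeff x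

lemma lastCoeff_mulLB (x : α) (u : FreeDeg K α (n + 1)) :
    lastCoeff x (S.mulLB u) = (S.sign x)⁻¹ • S.mulLB (lastCoeff x u) := by
  simp [mulLB]

lemma mulLB_mulR_a (u : FreeDeg K α n) : S.mulLB (mulR S.a u) = mulR S.a (S.mulLB u) := by
  refine ext_lastCoeff fun y => ?_
  rw [lastCoeff_mulLB]
  obtain rfl | hy := eq_or_ne y S.a
  · simp [S.sign_a]
  · simp [lastCoeff_mulR_of_ne hy]

lemma d_mulLB (u : FreeDeg K α n) :
    S.d (S.mulLB u) = mulL S.a (mulL S.a u) - S.mulLB (S.d u) := by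
  induction n with
  | zero => simp [mulLB, mulL_zero_deg, mulL_mulR]
  | succ n ih =>
    refine ext_lastCoeff fun y => ?_
    rw [map_sub, lastCoeff_mulLB]
    obtain rfl | hy := eq_or_ne y S.a
    · simp only [lastCoeff_a_d, lastCoeff_mulLB, S.sign_a, S.sign_b, ih, lastCoeff_mulL,
        mulLB_mulR_a, inv_one, one_smul, inv_neg, Units.neg_smul, map_neg, map_add]
      abel
    · have hsign : (S.sign y : K) • (S.sign y)⁻¹ • (mulL S.a (mulL S.a (lastCoeff y u))) =
          mulL S.a (mulL S.a (lastCoeff y u)) := smul_inv_smul (S.sign y) _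
      rw [S.lastCoeff_d_of_ne hy, lastCoeff_mulLB, S.lastCoeff_d_of_ne hy, Units.smul_def, map_smul,
        map_smul, ih, smul_sub, smul_sub, smul_comm (_ : K) _ (S.mulLB _)]
      simp only [lastCoeff_mulL, ← Units.smul_def, hsign]

/-- The decomposition `u = ∑ c, u_c c + u_b b + u_a a`, with `c` running over the neutral letters,
as an equivalence `u ↦ (u_c, u_b, u_a)`. -/
def splitLast : FreeDeg K α (n + 1) ≃ₗ[K]
    (S.Neutral → FreeDeg K α n) × FreeDeg K α n × FreeDeg K α n where
  toFun u := (fun c => lastCoeff c.1 u, lastCoeff S.b u, lastCoeff S.a u)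
  map_add' _ _ := by simp only [map_add]; rfl
  map_smul' _ _ := by simp only [map_smul]; rfl
  invFun p := ofLast fun x =>
    if ha : x = S.a then p.2.2 else if hb : x = S.b then p.2.1 else p.1 ⟨x, ha, hb⟩
  left_inv u := ext_lastCoeff fun x => by
    rw [lastCoeff_ofLast]
    split_ifs with ha hb
    · rw [ha]
    · rw [hb]
    · rfl
  right_inv p := by
    ext c : 3
    · simp [c.2.1, c.2.2]
    · simp [S.a_ne_b.symm]
    · simp

@[simp]
lemma splitLast_apply (u : FreeDeg K α (n + 1)) :
    S.splitLast u = (fun c => lastCoeff c.1 u, lastCoeff S.b u, lastCoeff S.a u) := rfl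

/-- The element `∑ c, g_c c`, with `c` running over the neutral letters. -/
def neutralSum : (S.Neutral → FreeDeg K α n) →ₗ[K] FreeDeg K α (n + 1) :=
  S.splitLast.symm.toLinearMap ∘ₗ LinearMap.inl K _ _

lemma splitLast_neutralSum (g : S.Neutral → FreeDeg K α n) :
    S.splitLast (S.neutralSum g) = (g, 0, 0) :=
  S.splitLast.apply_symm_apply _

@[simp]
lemma lastCoeff_neutralSum (c : S.Neutral) (g : S.Neutral → FreeDeg K α n) :
    lastCoeff c.1 (S.neutralSum g) = g c :=
  congrFun (congrArg Prod.fst (S.splitLast_neutralSum g)) c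

@[simp]
lemma lastCoeff_b_neutralSum (g : S.Neutral → FreeDeg K α n) :
    lastCoeff S.b (S.neutralSum g) = 0 :=
  congrArg (fun p => p.2.1) (S.splitLast_neutralSum g)

@[simp]
lemma lastCoeff_a_neutralSum (g : S.Neutral → FreeDeg K α n) :
    lastCoeff S.a (S.neutralSum g) = 0 :=
  congrArg (fun p => p.2.2) (S.splitLast_neutralSum g)

@[simp]
lemma lastCoeff_neutral_mulR_a (c : S.Neutral) (u : FreeDeg K α n) :
    lastCoeff c.1 (mulR S.a u) = 0 :=
  lastCoeff_mulR_of_ne c.2.1 u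

@[simp]
lemma lastCoeff_neutral_mulR_b (c : S.Neutral) (u : FreeDeg K α n) :
    lastCoeff c.1 (mulR S.b u) = 0 :=
  lastCoeff_mulR_of_ne c.2.2 u

@[simp]
lemma lastCoeff_a_mulR_b (u : FreeDeg K α n) : lastCoeff S.a (mulR S.b u) = 0 :=
  lastCoeff_mulR_of_ne S.a_ne_b u

@[simp]
lemma lastCoeff_b_mulR_a (u : FreeDeg K α n) : lastCoeff S.b (mulR S.a u) = 0 :=
  lastCoeff_mulR_of_ne S.a_ne_b.symm u

@[simp]
lemma lastCoeff_neutral_d (c : S.Neutral) (u : FreeDeg K α (n + 1)) :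
    lastCoeff c.1 (S.d u) = (S.sign c.1 : K) • S.d (lastCoeff c.1 u) :=
  S.lastCoeff_d_of_ne c.2.1 u

/-- The cocycles of degree `n`. -/
def cocycles (n : ℕ) : Submodule K (FreeDeg K α n) := LinearMap.ker S.d

@[simp]
lemma mem_cocycles {u : FreeDeg K α n} : u ∈ S.cocycles n ↔ S.d u = 0 := Iff.rfl

lemma mem_cocycles_succ {u : FreeDeg K α (n + 1)} :
    u ∈ S.cocycles (n + 1) ↔ (∀ c : S.Neutral, lastCoeff c.1 u ∈ S.cocycles n) ∧
      lastCoeff S.b u ∈ S.cocycles n ∧ mulR S.a (lastCoeff S.b u) + S.d (lastCoeff S.a u) = 0 := by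
  simp only [mem_cocycles]
  refine ⟨fun h => ⟨fun c => ?_, ?_, ?_⟩, fun ⟨hc, hb, ha⟩ => S.ext_neutral ?_ ?_ ?_⟩
  · have := congrArg (lastCoeff c.1) h
    simpa using this
  · have := congrArg (lastCoeff S.b) h
    simpa using this
  · have := congrArg (lastCoeff S.a) h
    simpa [add_comm] using this
  · simpa using hc
  · simpa using hb
  · simpa [add_comm] using ha

/-- The twisted commutator `u ↦ u a + s a u` with `a`; it commutes with `∂`. -/
def twistedComm (s : K) : FreeDeg K α n →ₗ[K] FreeDeg K α (n + 1) := mulR S.a + s • mulL S.a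

lemma twistedComm_apply (s : K) (u : FreeDeg K α n) :
    S.twistedComm s u = mulR S.a u + s • mulL S.a u := rfl

lemma d_twistedComm (s : K) (u : FreeDeg K α n) :
    S.d (S.twistedComm s u) = S.twistedComm s (S.d u) := by
  simp [twistedComm_apply]

/-- The cocycles of degree `n` whose twisted commutator with `a` is a coboundary. -/
def twistedCentralizer (s : K) (n : ℕ) : Submodule K (FreeDeg K α n) :=
  S.cocycles n ⊓ (LinearMap.range S.d).comap (S.twistedComm s)

lemma mem_twistedCentralizer {s : K} {u : FreeDeg K α n} :
    u ∈ S.twistedCentralizer s n ↔ S.d u = 0 ∧ ∃ t : FreeDeg K α n, S.d t = S.twistedComm s u :=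
  Iff.rfl

lemma d_mem_twistedCentralizer (s : K) (t : FreeDeg K α n) :
    S.d t ∈ S.twistedCentralizer s (n + 1) :=
  S.mem_twistedCentralizer.2 ⟨S.d_d t, S.twistedComm s t, S.d_twistedComm s t⟩

lemma finrank_cocycles_zero : Module.finrank K (S.cocycles 0) = 1 := by
  have htop : S.cocycles 0 = ⊤ := LinearMap.ker_zero
  rw [htop, finrank_top, finrank_freeDeg_zero]

section Finite

variable [Fintype α]

lemma card_neutral_add_two : Fintype.card S.Neutral + 2 = Fintype.card α := by
  have hcompl : (Finset.univ.filter fun c => c ≠ S.a ∧ c ≠ S.b) = {S.a, S.b}ᶜ := by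
    ext c
    simp
  rw [Fintype.card_subtype, hcompl, ← Finset.card_pair S.a_ne_b, Finset.card_compl_add_card]

lemma finrank_range_d_add_finrank_cocycles (n : ℕ) :
    Module.finrank K (LinearMap.range (S.d (n := n))) + Module.finrank K (S.cocycles n) =
      Fintype.card α ^ n := by
  rw [← finrank_freeDeg (K := K), ← LinearMap.finrank_range_add_finrank_ker (S.d (n := n)),
    cocycles]

lemma finrank_cocycles_succ (n : ℕ) :
    Module.finrank K (S.cocycles (n + 1)) =
      (Fintype.card S.Neutral + 1) * Module.finrank K (S.cocycles n) +
        Module.finrank K (S.twistedCentralizer 0 n) := by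
  have hcomap : S.cocycles (n + 1) =
      ((Submodule.pi Set.univ fun _ => S.cocycles n).prod
        ((S.cocycles n).prod ⊤ ⊓ LinearMap.ker ((S.twistedComm 0).coprod S.d))).comap
          S.splitLast.toLinearMap := by
    ext u
    simp [S.mem_cocycles_succ, twistedComm_apply, Submodule.mem_pi]
  rw [hcomap, (S.splitLast.ofSubmodule' _).finrank_eq, finrank_submodule_prod, finrank_submodule_pi,
    finrank_prod_top_inf_ker_coprod]
  change _ + (Module.finrank K (S.twistedCentralizer 0 n) + Module.finrank K (S.cocycles n)) = _
  ring

lemma finrank_twistedCentralizer_zero_succ (n : ℕ) :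
    Module.finrank K (S.twistedCentralizer 0 (n + 1)) +
      Module.finrank K (S.twistedCentralizer 0 n) = Fintype.card α ^ n := by
  have hexact : S.twistedCentralizer 0 (n + 1) =
      (S.cocycles n).map (S.twistedComm 0) ⊔ LinearMap.range S.d := by
    refine le_antisymm (fun u hu => ?_) (sup_le ?_ ?_)
    · obtain ⟨-, t, ht⟩ := S.mem_twistedCentralizer.1 hu
      have hta : mulR S.a (lastCoeff S.b t) + S.d (lastCoeff S.a t) = u := by
        simpa [twistedComm_apply, add_comm] using congrArg (lastCoeff S.a) ht
      have htb : S.d (lastCoeff S.b t) = 0 := by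
        simpa [twistedComm_apply] using congrArg (lastCoeff S.b) ht
      subst hta
      exact Submodule.add_mem_sup ⟨_, htb, by simp [twistedComm_apply]⟩ ⟨_, rfl⟩
    · rintro _ ⟨u, hu, rfl⟩
      refine S.mem_twistedCentralizer.2 ⟨?_, mulR S.b u, ?_⟩
      · rw [d_twistedComm, S.mem_cocycles.1 hu, map_zero]
      · simp [twistedComm_apply, S.mem_cocycles.1 hu]
    · rintro _ ⟨t, rfl⟩
      exact S.d_mem_twistedCentralizer 0 t
  rw [hexact, ← S.finrank_range_d_add_finrank_cocycles]
  exact finrank_map_sup_add_finrank_inf_comap _ _ _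

lemma finrank_cocycles_succ_add (n : ℕ) :
    Module.finrank K (S.cocycles (n + 1)) + Module.finrank K (S.cocycles n) =
      Fintype.card α ^ n + (Fintype.card S.Neutral + 1) ^ (n + 1) := by
  induction n with
  | zero =>
    have h0 : S.twistedCentralizer 0 0 = ⊥ := by
      refine (Submodule.eq_bot_iff _).2 fun u hu => ?_
      obtain ⟨-, t, ht⟩ := S.mem_twistedCentralizer.1 hu
      exact mulR_injective S.a (by simpa [twistedComm_apply] using ht.symm)
    rw [S.finrank_cocycles_succ, S.finrank_cocycles_zero, h0, finrank_bot]
    ring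
  | succ n ih =>
    have h1 := S.finrank_cocycles_succ (n + 1)
    have h2 := S.finrank_cocycles_succ n
    have h3 := S.finrank_twistedCentralizer_zero_succ n
    linear_combination h1 + h2 + h3 + (Fintype.card S.Neutral + 1) * ih +
      Fintype.card α ^ n * S.card_neutral_add_two

end Finite

/-- Right multiplication by `θ = a b - b a`. -/
def mulTheta : FreeDeg K α n →ₗ[K] FreeDeg K α (n + 2) :=
  mulR S.b ∘ₗ mulR S.a - mulR S.a ∘ₗ mulR S.b

lemma mulTheta_apply (u : FreeDeg K α n) :
    S.mulTheta u = mulR S.b (mulR S.a u) - mulR S.a (mulR S.b u) := rfl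

lemma d_mulTheta (u : FreeDeg K α n) : S.d (S.mulTheta u) = -S.mulTheta (S.d u) := by
  simp only [mulTheta_apply, map_sub, d_mulR_a, d_mulR_b]
  abel

lemma mulTheta_mem_cocycles {u : FreeDeg K α n} (hu : u ∈ S.cocycles n) :
    S.mulTheta u ∈ S.cocycles (n + 2) := by
  rw [mem_cocycles, d_mulTheta, S.mem_cocycles.1 hu, map_zero, neg_zero]

lemma twistedComm_mulTheta (s : K) {u : FreeDeg K α n} (hu : u ∈ S.cocycles n) :
    S.twistedComm s (S.mulTheta u) =
      -S.mulTheta (S.twistedComm (-s) u) - S.d (mulR S.b (mulR S.b u)) := by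
  simp only [twistedComm_apply, mulTheta_apply, map_add, map_sub, map_smul, mulL_mulR, d_mulR_b,
    S.mem_cocycles.1 hu, map_zero, smul_sub]
  module

lemma mulTheta_mem_twistedCentralizer {s : K} {u : FreeDeg K α n}
    (hu : u ∈ S.twistedCentralizer (-s) n) : S.mulTheta u ∈ S.twistedCentralizer s (n + 2) := by
  obtain ⟨hdu, t, ht⟩ := S.mem_twistedCentralizer.1 hu
  refine S.mem_twistedCentralizer.2
    ⟨S.mulTheta_mem_cocycles hdu, S.mulTheta t - mulR S.b (mulR S.b u), ?_⟩
  rw [S.twistedComm_mulTheta s hdu, ← ht, map_sub, d_mulTheta]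

lemma mulL_neutralSum (x : α) (g : S.Neutral → FreeDeg K α n) :
    mulL x (S.neutralSum g) = S.neutralSum fun c => mulL x (g c) :=
  S.ext_neutral (by simp) (by simp) (by simp)

lemma d_neutralSum (g : S.Neutral → FreeDeg K α n) :
    S.d (S.neutralSum g) = S.neutralSum fun c => (S.sign c.1 : K) • S.d (g c) :=
  S.ext_neutral (by simp) (by simp) (by simp)

lemma neutralSum_mem_cocycles {g : S.Neutral → FreeDeg K α n} (hg : ∀ c, g c ∈ S.cocycles n) :
    S.neutralSum g ∈ S.cocycles (n + 1) := by
  have hd : (fun c => (S.sign c.1 : K) • S.d (g c)) = 0 :=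
    funext fun c => by rw [S.mem_cocycles.1 (hg c), smul_zero, Pi.zero_apply]
  rw [mem_cocycles, d_neutralSum, hd, map_zero]

lemma neutralSum_mem_range_d {g : S.Neutral → FreeDeg K α (n + 1)}
    (hg : ∀ c, g c ∈ LinearMap.range (S.d (n := n))) :
    S.neutralSum g ∈ LinearMap.range (S.d (n := n + 1)) := by
  choose h hh using hg
  refine ⟨S.neutralSum fun c => (S.sign c.1 : K)⁻¹ • h c, ?_⟩
  rw [d_neutralSum]
  congr 1
  funext c
  rw [map_smul, smul_inv_smul₀ (S.sign c.1).ne_zero, hh]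

/-- The map `(u, g) ↦ u θ + ∑ c, g_c c`. -/
def thetaNeutralSum :
    FreeDeg K α n × (S.Neutral → FreeDeg K α (n + 1)) →ₗ[K] FreeDeg K α (n + 2) :=
  S.mulTheta.coprod S.neutralSum

lemma thetaNeutralSum_apply (u : FreeDeg K α n) (g : S.Neutral → FreeDeg K α (n + 1)) :
    S.thetaNeutralSum (u, g) = S.mulTheta u + S.neutralSum g := rfl

/-- The pairs `(u, g)` of cocycles to which `thetaNeutralSum` is applied. -/
def cocyclePairs (n : ℕ) : Submodule K (FreeDeg K α n × (S.Neutral → FreeDeg K α (n + 1))) :=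
  (S.cocycles n).prod (Submodule.pi Set.univ fun _ => S.cocycles (n + 1))

lemma thetaNeutralSum_mem_cocycles {p : FreeDeg K α n × (S.Neutral → FreeDeg K α (n + 1))}
    (hp : p ∈ S.cocyclePairs n) : S.thetaNeutralSum p ∈ S.cocycles (n + 2) := by
  obtain ⟨u, g⟩ := p
  exact add_mem (S.mulTheta_mem_cocycles hp.1) (S.neutralSum_mem_cocycles fun c => hp.2 c trivial)

lemma exists_cocycle_decomposition {z : FreeDeg K α (n + 2)} (hz : z ∈ S.cocycles (n + 2)) :
    ∃ p ∈ S.cocyclePairs n, ∃ h : S.Neutral → FreeDeg K α n, (∀ c, h c ∈ S.cocycles n) ∧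
      ∃ t : FreeDeg K α (n + 1), z = S.thetaNeutralSum p + mulR S.a (S.neutralSum h) + S.d t := by
  obtain ⟨hc, -, ha⟩ := S.mem_cocycles_succ.1 hz
  have hac (c : S.Neutral) : S.d (lastCoeff c.1 (lastCoeff S.a z)) = 0 := by
    simpa using congrArg (lastCoeff c.1) ha
  have hab : S.d (lastCoeff S.b (lastCoeff S.a z)) = 0 := by
    simpa using congrArg (lastCoeff S.b) ha
  have haa : lastCoeff S.b z + (S.d (lastCoeff S.a (lastCoeff S.a z)) +
      mulR S.a (lastCoeff S.b (lastCoeff S.a z))) = 0 := by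
    simpa using congrArg (lastCoeff S.a) ha
  refine ⟨(-lastCoeff S.b (lastCoeff S.a z), fun c => lastCoeff c.1 z),
    ⟨by simpa using hab, fun c _ => hc c⟩, fun c => lastCoeff c.1 (lastCoeff S.a z), hac,
    mulR S.b (lastCoeff S.a (lastCoeff S.a z)), S.ext_neutral ?_ ?_ (S.ext_neutral ?_ ?_ ?_)⟩
  · simp [thetaNeutralSum_apply, mulTheta_apply]
  · rw [eq_neg_of_add_eq_zero_left haa]
    simp only [thetaNeutralSum_apply, mulTheta_apply, map_add, map_sub, map_neg,
      lastCoeff_mulR_self, lastCoeff_b_mulR_a, lastCoeff_b_neutralSum, lastCoeff_b_d]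
    abel
  all_goals simp [thetaNeutralSum_apply, mulTheta_apply]

lemma map_thetaNeutralSum_sup_twistedCentralizer {s : K} (hs : s * s = 1) (n : ℕ) :
    (S.cocyclePairs n).map S.thetaNeutralSum ⊔ S.twistedCentralizer s (n + 2) =
      S.cocycles (n + 2) := by
  refine le_antisymm (sup_le ?_ inf_le_left) fun z hz => ?_
  · rintro _ ⟨p, hp, rfl⟩
    exact S.thetaNeutralSum_mem_cocycles hp
  obtain ⟨p, hp, h, hh, t, rfl⟩ := S.exists_cocycle_decomposition hz
  set y := S.neutralSum h with hy
  have hdy : S.d y = 0 := S.neutralSum_mem_cocycles hh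
  have hay : mulL S.a y = S.thetaNeutralSum (0, fun c => mulL S.a (h c)) := by
    rw [hy, mulL_neutralSum, thetaNeutralSum_apply, map_zero, zero_add]
  have hpair : ((0, fun c => mulL S.a (h c)) : _ × (S.Neutral → _)) ∈ S.cocyclePairs n :=
    ⟨zero_mem _, fun c _ => by simp [S.mem_cocycles.1 (hh c)]⟩
  have hcomm : S.twistedComm (-s) y ∈ S.twistedCentralizer s (n + 2) := by
    refine S.mem_twistedCentralizer.2 ⟨?_, mulR S.b y - S.mulLB y, ?_⟩
    · rw [d_twistedComm, hdy, map_zero]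
    · simp only [twistedComm_apply, map_sub, d_mulR_b, d_mulLB, hdy, map_zero, map_add, map_smul,
        mulL_mulR]
      linear_combination (norm := module) hs • mulL S.a (mulL S.a y)
  have hsplit : S.thetaNeutralSum p + mulR S.a y + S.d t =
      S.thetaNeutralSum (p + s • (0, fun c => mulL S.a (h c))) +
        (S.twistedComm (-s) y + S.d t) := by
    rw [map_add, map_smul, ← hay, twistedComm_apply]
    module
  rw [hsplit]
  exact Submodule.add_mem_sup (Submodule.mem_map_of_mem (add_mem hp (Submodule.smul_mem _ s hpair)))
    (add_mem hcomm (S.d_mem_twistedCentralizer s t))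

lemma cocyclePairs_inf_comap_twistedCentralizer (s : K) (n : ℕ) :
    S.cocyclePairs n ⊓ (S.twistedCentralizer s (n + 2)).comap S.thetaNeutralSum =
      (S.twistedCentralizer (-s) n).prod
        (Submodule.pi Set.univ fun _ => LinearMap.range (S.d (n := n))) := by
  ext ⟨u, g⟩
  constructor
  · rintro ⟨⟨hu, -⟩, hug⟩
    obtain ⟨-, t, ht⟩ := S.mem_twistedCentralizer.1 hug
    have hta := congrArg (lastCoeff S.a) ht
    refine ⟨⟨hu, -lastCoeff S.b (lastCoeff S.a t), ?_⟩,
      fun c _ => ⟨(S.sign c.1 : K) • lastCoeff c.1 (lastCoeff S.a t), ?_⟩⟩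
    · have := congrArg (lastCoeff S.b) hta
      simpa [twistedComm_apply, thetaNeutralSum_apply, mulTheta_apply, eq_comm] using this
    · have := congrArg (lastCoeff c.1) hta
      simpa [twistedComm_apply, thetaNeutralSum_apply, mulTheta_apply] using this
  · rintro ⟨hu, hg⟩
    refine ⟨⟨hu.1, fun c hc => ?_⟩, add_mem (S.mulTheta_mem_twistedCentralizer hu) ?_⟩
    · obtain ⟨t, ht⟩ := hg c hc
      rw [SetLike.mem_coe, mem_cocycles, ← ht, d_d]
    · obtain ⟨t, ht⟩ := S.neutralSum_mem_range_d fun c => hg c trivial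
      exact ht ▸ S.d_mem_twistedCentralizer s t

lemma finrank_twistedCentralizer_one (s : K) :
    Module.finrank K (S.twistedCentralizer s 1) = 1 := by
  have hrange : S.twistedCentralizer s 1 =
      LinearMap.range (mulR S.a : FreeDeg K α 0 →ₗ[K] FreeDeg K α 1) := by
    refine le_antisymm (fun u hu => ?_) ?_
    · obtain ⟨-, t, ht⟩ := S.mem_twistedCentralizer.1 hu
      refine ⟨lastCoeff S.b t - s • lastCoeff S.a u, ?_⟩
      have hta := congrArg (lastCoeff S.a) ht
      rw [twistedComm_apply, lastCoeff_a_d, d_zero_deg, zero_add] at hta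
      rw [map_sub, map_smul, hta]
      simp [mulL_zero_deg]
    · rintro _ ⟨v, rfl⟩
      refine S.mem_twistedCentralizer.2 ⟨by simp, (1 + s) • mulR S.b v, ?_⟩
      simp [twistedComm_apply, mulL_zero_deg, mulL_mulR, add_smul]
  rw [hrange, LinearMap.finrank_range_of_inj (mulR_injective S.a), finrank_freeDeg_zero]

lemma finrank_twistedCentralizer_neg_one_pow_zero (h2 : (2 : K) ≠ 0) (k : ℕ) :
    Module.finrank K (S.twistedCentralizer ((-1) ^ k) 0) = k % 2 := by
  obtain hk | hk := Nat.even_or_odd k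
  · have hbot : S.twistedCentralizer 1 0 = ⊥ := by
      refine (Submodule.eq_bot_iff _).2 fun u hu => mulR_injective S.a ?_
      obtain ⟨-, t, ht⟩ := S.mem_twistedCentralizer.1 hu
      rw [d_zero_deg, twistedComm_apply, mulL_zero_deg, one_smul, ← two_smul K] at ht
      rw [map_zero]
      exact (smul_eq_zero_iff_right h2).1 ht.symm
    rw [hk.neg_one_pow, hbot, finrank_bot, Nat.even_iff.1 hk]
  · have htop : S.twistedCentralizer (-1) 0 = ⊤ := eq_top_iff.2 fun u _ =>
      S.mem_twistedCentralizer.2 ⟨rfl, 0, by simp [twistedComm_apply, mulL_zero_deg]⟩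
    rw [hk.neg_one_pow, htop, finrank_top, finrank_freeDeg_zero, Nat.odd_iff.1 hk]

section Finite

variable [Fintype α]

lemma finrank_twistedCentralizer_add_two {s : K} (hs : s * s = 1) (n : ℕ) :
    Module.finrank K (S.twistedCentralizer s (n + 2)) + Module.finrank K (S.cocycles n) +
        Fintype.card S.Neutral * (Fintype.card S.Neutral + 1) ^ (n + 1) =
      Module.finrank K (S.cocycles (n + 2)) +
        Module.finrank K (S.twistedCentralizer (-s) n) := by
  have h := finrank_map_sup_add_finrank_inf_comap S.thetaNeutralSum (S.cocyclePairs n)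
    (S.twistedCentralizer s (n + 2))
  rw [S.map_thetaNeutralSum_sup_twistedCentralizer hs,
    S.cocyclePairs_inf_comap_twistedCentralizer, cocyclePairs, finrank_submodule_prod,
    finrank_submodule_prod, finrank_submodule_pi, finrank_submodule_pi] at h
  have hrank := S.finrank_range_d_add_finrank_cocycles n
  have hz := S.finrank_cocycles_succ_add n
  linear_combination -h - Fintype.card S.Neutral * hz + Fintype.card S.Neutral * hrank

/-- The last term depends on `n` modulo `4` because right multiplication by `θ` flips `s`. -/
lemma finrank_twistedCentralizer_succ_add {s : K} (hs : s * s = 1) (n : ℕ) :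
    Module.finrank K (S.twistedCentralizer s (n + 1)) +
        Module.finrank K (S.twistedCentralizer s n) =
      Fintype.card α ^ n +
        Module.finrank K (S.twistedCentralizer ((-1) ^ ((n + 1) / 2) * s) 0) := by
  induction n using Nat.twoStepInduction generalizing s with
  | zero =>
    rw [S.finrank_twistedCentralizer_one, show (-1 : K) ^ ((0 + 1) / 2) * s = s by simp, pow_zero]
  | one =>
    have h := S.finrank_twistedCentralizer_add_two hs 0
    have hz0 := S.finrank_cocycles_succ_add 0
    have hz1 := S.finrank_cocycles_succ_add 1
    have hone := S.finrank_twistedCentralizer_one s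
    rw [show (-1 : K) ^ ((1 + 1) / 2) * s = -s by simp]
    linear_combination h + hone + hz1 - hz0
  | more n ih _ =>
    have h := S.finrank_twistedCentralizer_add_two hs n
    have h' := S.finrank_twistedCentralizer_add_two hs (n + 1)
    have hz := S.finrank_cocycles_succ_add n
    have hz' := S.finrank_cocycles_succ_add (n + 2)
    have hneg := ih (s := -s) (by rw [neg_mul_neg, hs])
    have hsign : (-1 : K) ^ ((n + 2 + 1) / 2) * s = (-1) ^ ((n + 1) / 2) * -s := by
      rw [show (n + 2 + 1) / 2 = (n + 1) / 2 + 1 by omega]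
      ring
    rw [hsign]
    linear_combination h + h' - hz + hz' + hneg

end Finite

/-- The differential of the mapping cone of the commutator `u ↦ u a + a u`. -/
def coneD : FreeDeg K α n × FreeDeg K α n →ₗ[K] FreeDeg K α (n + 1) × FreeDeg K α (n + 1) :=
  (-S.d ∘ₗ LinearMap.fst K _ _).prod ((S.twistedComm 1).coprod S.d)

lemma coneD_apply (u v : FreeDeg K α n) :
    S.coneD (u, v) = (-S.d u, S.twistedComm 1 u + S.d v) := rfl

lemma coneD_coneD (p : FreeDeg K α n × FreeDeg K α n) : S.coneD (S.coneD p) = 0 := by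
  ext1 <;> simp [coneD, d_twistedComm]

lemma finrank_ker_coneD [Finite α] (n : ℕ) :
    Module.finrank K (LinearMap.ker (S.coneD (n := n))) =
      Module.finrank K (S.twistedCentralizer 1 n) + Module.finrank K (S.cocycles n) := by
  have hker : LinearMap.ker (S.coneD (n := n)) =
      (S.cocycles n).prod ⊤ ⊓ LinearMap.ker ((S.twistedComm 1).coprod S.d) := by
    ext p
    simp [coneD, and_comm]
  rw [hker, finrank_prod_top_inf_ker_coprod]
  rfl

lemma finrank_ker_coneD_zero [Finite α] (h2 : (2 : K) ≠ 0) :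
    Module.finrank K (LinearMap.ker (S.coneD (n := 0))) = 1 := by
  have h0 := S.finrank_twistedCentralizer_neg_one_pow_zero h2 0
  rw [pow_zero] at h0
  rw [finrank_ker_coneD, h0, finrank_cocycles_zero]

lemma finrank_ker_coneD_succ [Fintype α] (h2 : (2 : K) ≠ 0) (n : ℕ) :
    Module.finrank K (LinearMap.ker (S.coneD (n := n + 1))) =
      Module.finrank K (LinearMap.range (S.coneD (n := n))) +
        ((Fintype.card S.Neutral + 1) ^ (n + 1) + (n + 1) / 2 % 2) := by
  have hrank := LinearMap.finrank_range_add_finrank_ker (S.coneD (n := n))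
  rw [Module.finrank_prod, finrank_freeDeg, finrank_ker_coneD] at hrank
  have hz := S.finrank_cocycles_succ_add n
  have hcomm := S.finrank_twistedCentralizer_succ_add (one_mul 1) n
  rw [mul_one, S.finrank_twistedCentralizer_neg_one_pow_zero h2] at hcomm
  rw [finrank_ker_coneD]
  linear_combination hz + hcomm - hrank

end SquareDatum

section Cochains

variable {m n : ℕ}

/-- The cochain `∑ I, u_I φ^I_x` with output `x` attached to `u = ∑ I, u_I I`. -/
noncomputable def cochainOf (x : Fin m) : FreeDeg ℂ (Fin m) n →ₗ[ℂ] Cochain m :=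
  Fintype.linearCombination ℂ fun f => Finsupp.single (List.ofFn f, x) 1

lemma cochainOf_single (x : Fin m) (f : Fin n → Fin m) :
    cochainOf x (Pi.single f 1) = Finsupp.single (List.ofFn f, x) 1 := by
  rw [cochainOf, Fintype.linearCombination_apply_single, one_smul]

lemma cochainOf_apply_ofFn (x y : Fin m) (u : FreeDeg ℂ (Fin m) n) (f : Fin n → Fin m) :
    cochainOf x u (List.ofFn f, y) = if x = y then u f else 0 := by
  simp [cochainOf, Fintype.linearCombination_apply, Finsupp.finsetSum_apply, Finsupp.single_apply,
    List.ofFn_injective.eq_iff, ite_and]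

lemma range_cochainOf (x : Fin m) :
    LinearMap.range (cochainOf x : FreeDeg ℂ (Fin m) n →ₗ[ℂ] Cochain m) = Cnx m n x := by
  rw [cochainOf, Fintype.range_linearCombination, Cnx]
  congr 1
  ext φ
  constructor
  · rintro ⟨f, rfl⟩
    exact ⟨List.ofFn f, List.length_ofFn, rfl⟩
  · rintro ⟨I, rfl, rfl⟩
    exact ⟨I.get, by simp only [List.ofFn_get]⟩

/-- The map `φ^I_x ↦ φ^{Iy}_x`. -/
noncomputable def appendLetter (y : Fin m) : Cochain m →ₗ[ℂ] Cochain m :=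
  Finsupp.lmapDomain ℂ ℂ fun p => (p.1 ++ [y], p.2)

lemma appendLetter_single (y : Fin m) (I : List (Fin m)) (x : Fin m) :
    appendLetter y (Finsupp.single (I, x) 1) = Finsupp.single (I ++ [y], x) 1 :=
  Finsupp.mapDomain_single

lemma ofFn_snoc {α : Type*} (f : Fin n → α) (y : α) :
    List.ofFn (Fin.snoc f y : Fin (n + 1) → α) = List.ofFn f ++ [y] := by
  rw [List.ofFn_succ_last]
  simp

lemma cochainOf_mulR (x y : Fin m) (u : FreeDeg ℂ (Fin m) n) :
    cochainOf x (mulR y u) = appendLetter y (cochainOf x u) := by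
  suffices h : cochainOf x ∘ₗ mulR y =
      appendLetter y ∘ₗ (cochainOf x : FreeDeg ℂ (Fin m) n →ₗ[ℂ] _) from
    LinearMap.congr_fun h u
  refine (Pi.basisFun ℂ _).ext fun f => ?_
  simp only [Pi.basisFun_apply, LinearMap.comp_apply, mulR_single, cochainOf_single,
    appendLetter_single, ofFn_snoc]

variable {r : ℕ} {a b : Fin m}

lemma basisComp_append_singleton (ha : par r a = 0) (hb : par r b = 1) (I : List (Fin m))
    (x y : Fin m) :
    basisComp r (I ++ [y], x) ([a, a], b) = appendLetter y (basisComp r (I, x) ([a, a], b)) +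
      if y = b then (-1 : ℂ) ^ (lpar r I + 1) • Finsupp.single (I ++ [a, a], x) 1 else 0 := by
  have hq : ppar r ([a, a], b) = 1 := by simp [ppar, lpar, ha, hb]
  have hsum (J : List (Fin m)) : basisComp r (J, x) ([a, a], b) = ∑ k ∈ Finset.range J.length,
      if J[k]? = some b then (-1 : ℂ) ^ lpar r (J.take (k + 1)) •
        Finsupp.single (insertAt J [a, a] k, x) 1 else 0 := by
    rw [Finset.sum_range, basisComp]
    refine Finset.sum_congr rfl fun k _ => ?_
    simp [hq]
  rw [hsum, hsum, List.length_append, List.length_singleton, Finset.sum_range_succ, map_sum]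
  congr 1
  · refine Finset.sum_congr rfl fun k hk => ?_
    have hk := Finset.mem_range.1 hk
    rw [List.getElem?_append_left hk, List.take_append_of_le_length hk, apply_ite (appendLetter y),
      map_smul, appendLetter_single, map_zero, insertAt, insertAt, List.drop_append_of_le_length hk,
      List.take_append_of_le_length hk.le]
    simp only [List.append_assoc, Nat.succ_eq_add_one]
  · simp only [List.getElem?_concat_length, Option.some.injEq]
    refine ite_congr rfl (fun h => ?_) fun _ => rfl
    simp [insertAt, lpar, h, hb]

lemma basisComp_square (ha : par r a = 0) (I : List (Fin m)) (x : Fin m) :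
    basisComp r ([a, a], b) (I, x) = if a = x then
      Finsupp.single (I ++ [a], b) 1 + Finsupp.single (a :: I, b) 1 else 0 := by
  refine (Fin.sum_univ_two _).trans ?_
  obtain rfl | h := eq_or_ne a x
  · simp [insertAt, lpar, ha]
  · simp [h]

lemma Dop_single (I : List (Fin m)) (x : Fin m) :
    Dop r a b (Finsupp.single (I, x) 1) = basisComp r ([a, a], b) (I, x) -
      (-1 : ℂ) ^ ppar r (I, x) • basisComp r (I, x) ([a, a], b) := by
  simp [Dop, dd, comp, twist]

/-- The parity signs of the letters, with an even letter `a` and an odd letter `b`. -/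
noncomputable def parityDatum (ha : par r a = 0) (hb : par r b = 1) : SquareDatum ℂ (Fin m) where
  a := a
  b := b
  sign x := (-1) ^ par r x
  a_ne_b h := by rw [h, hb] at ha; exact one_ne_zero ha
  sign_a := by rw [ha, pow_zero]
  sign_b := by rw [hb, pow_one]

lemma cochainOf_d_single (ha : par r a = 0) (hb : par r b = 1) (x : Fin m)
    (f : Fin n → Fin m) :
    cochainOf x ((parityDatum ha hb).d (Pi.single f 1)) =
      (-1 : ℂ) ^ lpar r (List.ofFn f) • basisComp r (List.ofFn f, x) ([a, a], b) := by
  induction n with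
  | zero =>
    have hempty : basisComp r (List.ofFn f, x) ([a, a], b) = 0 := Fin.sum_univ_zero _
    rw [SquareDatum.d_zero_deg, map_zero, hempty, smul_zero]
  | succ n ih =>
    induction f using Fin.snocCases with
    | snoc f y =>
      rw [← mulR_single, SquareDatum.d_mulR, map_add, map_smul, cochainOf_mulR, ih, ofFn_snoc,
        basisComp_append_singleton ha hb, smul_add]
      congr 1
      · rw [map_smul, smul_smul]
        simp [lpar, parityDatum, pow_add, mul_comm]
      · rw [apply_ite (cochainOf x), map_zero, smul_ite, smul_zero]
        refine ite_congr rfl (fun h => ?_) fun _ => rfl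
        change cochainOf x (mulR a (mulR a (Pi.single f 1))) = _
        have hparity : lpar r (List.ofFn f ++ [b]) = lpar r (List.ofFn f) + 1 := by simp [lpar, hb]
        rw [mulR_single, mulR_single, cochainOf_single, ofFn_snoc, ofFn_snoc, List.append_assoc, h,
          hparity, smul_smul, ← pow_add, Even.neg_one_pow ⟨_, rfl⟩, one_smul]
        rfl

/-- The cochain with components `u` and `v` at the outputs `a` and `b`. -/
noncomputable def pairCochain (a b : Fin m) :
    FreeDeg ℂ (Fin m) n × FreeDeg ℂ (Fin m) n →ₗ[ℂ] Cochain m :=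
  (cochainOf a).coprod (cochainOf b)

lemma range_pairCochain (a b : Fin m) :
    LinearMap.range (pairCochain a b (n := n)) = Cpair m a b n := by
  rw [pairCochain, LinearMap.range_coprod, range_cochainOf, range_cochainOf, Cpair]

lemma pairCochain_injective (h : a ≠ b) : Function.Injective (pairCochain a b (n := n)) := by
  refine (injective_iff_map_eq_zero _).2 fun ⟨u, v⟩ huv => ?_
  have hcoeff (f : Fin n → Fin m) (y : Fin m) :
      (if a = y then u f else 0) + (if b = y then v f else 0) = 0 := by
    simpa [pairCochain, cochainOf_apply_ofFn] using DFunLike.congr_fun huv (List.ofFn f, y)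
  ext f
  · simpa [h.symm] using hcoeff f a
  · simpa [h] using hcoeff f b

lemma Dop_pairCochain (ha : par r a = 0) (hb : par r b = 1)
    (p : FreeDeg ℂ (Fin m) n × FreeDeg ℂ (Fin m) n) :
    Dop r a b (pairCochain a b p) = pairCochain a b ((parityDatum ha hb).coneD p) := by
  suffices h : Dop r a b ∘ₗ pairCochain a b =
      pairCochain a b ∘ₗ (parityDatum ha hb).coneD (n := n) from LinearMap.congr_fun h p
  refine LinearMap.prod_ext ((Pi.basisFun ℂ _).ext fun f => ?_) ((Pi.basisFun ℂ _).ext fun f => ?_)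
  · simp only [Pi.basisFun_apply, LinearMap.comp_apply, LinearMap.inl_apply, pairCochain,
      SquareDatum.coneD_apply, LinearMap.coprod_apply, SquareDatum.twistedComm_apply, one_smul,
      map_add, map_neg, map_zero, add_zero, cochainOf_d_single, cochainOf_single, Dop_single,
      basisComp_square ha, if_true]
    change _ = _ + (cochainOf b (mulR a _) + cochainOf b (mulL a _))
    rw [mulR_single, mulL_single, cochainOf_single, cochainOf_single, ofFn_snoc, List.ofFn_cons]
    simp only [ppar, ha, add_zero]
    abel
  · have hab : a ≠ b := (parityDatum ha hb).a_ne_b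
    simp only [Pi.basisFun_apply, LinearMap.comp_apply, LinearMap.inr_apply, pairCochain,
      SquareDatum.coneD_apply, LinearMap.coprod_apply, map_zero, neg_zero, zero_add,
      cochainOf_d_single, cochainOf_single, Dop_single, basisComp_square ha]
    rw [if_neg hab, ppar, hb, pow_succ]
    module

lemma Zpair_eq_map (ha : par r a = 0) (hb : par r b = 1) : Zpair r a b n =
    (LinearMap.ker (parityDatum ha hb).coneD).map (pairCochain a b (n := n)) := by
  have hab : a ≠ b := (parityDatum ha hb).a_ne_b
  have hcomm : Dop r a b ∘ₗ pairCochain a b =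
      pairCochain a b ∘ₗ (parityDatum ha hb).coneD (n := n) :=
    LinearMap.ext (Dop_pairCochain ha hb)
  rw [Zpair, ← range_pairCochain, ← Submodule.map_top, Submodule.map_inf_eq_map_inf_comap,
    ← LinearMap.ker_comp, hcomm, LinearMap.ker_comp_of_ker_eq_bot _ (LinearMap.ker_eq_bot.2
      (pairCochain_injective hab)), top_inf_eq]

lemma Bpair_succ_eq_map (ha : par r a = 0) (hb : par r b = 1) : Bpair r a b (n + 1) =
    (LinearMap.range (parityDatum ha hb).coneD).map (pairCochain a b (n := n + 1)) := by
  rw [Bpair, ← range_pairCochain, ← LinearMap.range_comp, ← LinearMap.range_comp]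
  congr 1
  exact LinearMap.ext (Dop_pairCochain ha hb)

lemma Bpair_le_Zpair (ha : par r a = 0) (hb : par r b = 1) (n : ℕ) :
    Bpair r a b n ≤ Zpair r a b n := by
  cases n with
  | zero => exact bot_le
  | succ n =>
    rw [Zpair_eq_map ha hb, Bpair_succ_eq_map ha hb]
    refine Submodule.map_mono ?_
    rintro _ ⟨p, rfl⟩
    exact (parityDatum ha hb).coneD_coneD p

lemma finrank_Zpair (ha : par r a = 0) (hb : par r b = 1) (n : ℕ) :
    Module.finrank ℂ (Zpair r a b n) =
      Module.finrank ℂ (LinearMap.ker ((parityDatum ha hb).coneD (n := n))) := by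
  have hab : a ≠ b := (parityDatum ha hb).a_ne_b
  rw [Zpair_eq_map ha hb]
  exact (Submodule.equivMapOfInjective _ (pairCochain_injective hab) _).finrank_eq.symm

lemma finrank_Bpair_succ (ha : par r a = 0) (hb : par r b = 1) (n : ℕ) :
    Module.finrank ℂ (Bpair r a b (n + 1)) =
      Module.finrank ℂ (LinearMap.range ((parityDatum ha hb).coneD (n := n))) := by
  have hab : a ≠ b := (parityDatum ha hb).a_ne_b
  rw [Bpair_succ_eq_map ha hb]
  exact (Submodule.equivMapOfInjective _ (pairCochain_injective hab) _).finrank_eq.symm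

lemma finiteDimensional_Zpair (ha : par r a = 0) (hb : par r b = 1) (n : ℕ) :
    FiniteDimensional ℂ (Zpair r a b n) := by
  rw [Zpair_eq_map ha hb]
  infer_instance

lemma finrank_Hpair_add_finrank_Bpair (ha : par r a = 0) (hb : par r b = 1) (n : ℕ) :
    Module.finrank ℂ (Hpair r a b n) + Module.finrank ℂ (Bpair r a b n) =
      Module.finrank ℂ (Zpair r a b n) := by
  have := finiteDimensional_Zpair ha hb n
  rw [← Submodule.finrank_quotient_add_finrank ((Bpair r a b n).comap (Zpair r a b n).subtype),
    (Submodule.comapSubtypeEquivOfLe (Bpair_le_Zpair ha hb n)).finrank_eq]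

lemma finrank_Hpair (ha : par r a = 0) (hb : par r b = 1) (n : ℕ) :
    Module.finrank ℂ (Hpair r a b n) = (m - 1) ^ n + n / 2 % 2 := by
  have hcoh := finrank_Hpair_add_finrank_Bpair ha hb n
  rw [finrank_Zpair ha hb] at hcoh
  cases n with
  | zero =>
    have hB : Module.finrank ℂ (Bpair r a b 0) = 0 := finrank_bot ℂ _
    rw [(parityDatum ha hb).finrank_ker_coneD_zero two_ne_zero, hB] at hcoh
    simpa using hcoh
  | succ n =>
    have hcard := (parityDatum ha hb).card_neutral_add_two
    rw [Fintype.card_fin] at hcard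
    rw [(parityDatum ha hb).finrank_ker_coneD_succ two_ne_zero, finrank_Bpair_succ ha hb,
      show Fintype.card (parityDatum ha hb).Neutral + 1 = m - 1 by omega] at hcoh
    omega

end Cochains

theorem Hehat_Hfhat_dim_e1_general {r m : ℕ} {a b : Fin m} (ha : par r a = 0) (hb : par r b = 1)
    (n : ℕ) :
    Module.finrank ℂ (Hehat r a b n) + Module.finrank ℂ (Hfhat r a b n) =
      (m - 1) ^ n + (if n % 4 = 0 ∨ n % 4 = 1 then 0 else 1) := by
  have := finiteDimensional_Zpair ha hb n
  rw [Submodule.finrank_quotient_add_finrank, finrank_Hpair ha hb]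
  split_ifs <;> omega

/-- `dim Ĥ^n_e + dim Ĥ^n_f = (r+s−1)^n` if `n ≡ 0, 1 (mod 4)` and
`= (r+s−1)^n + 1` if `n ≡ 2, 3 (mod 4)`. -/
theorem Hehat_Hfhat_dim_e1 (r s : ℕ) (hr : 1 ≤ r) (hs : 1 ≤ s)
    (e1 fs : Fin (r + s)) (he1 : (e1 : ℕ) = 0) (hfs : (fs : ℕ) = r + s - 1) :
    ∀ n : ℕ,
      Module.finrank ℂ (Hehat r e1 fs n) + Module.finrank ℂ (Hfhat r e1 fs n) =
        (r + s - 1) ^ n + (if n % 4 = 0 ∨ n % 4 = 1 then 0 else 1) := by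
  exact fun n => Hehat_Hfhat_dim_e1_general (if_pos (by omega)) (if_neg (by omega)) n

end NilpotentCohomology
end
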